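/- Let n ≥ 1. The flip graph of n-periodic 2-triangulations on the 4n-gon is regular of degree 2(n−1): for every n-periodic 2-triangulation T on the 4n-gon, the number of n-periodic 2-triangulations T' on the 4n-gon with T' ≠ T such that T ∖ T' is the rotation orbit ẽ of a single 2-relevant edge e ∈ T (and T' ⊇ T ∖ ẽ) is exactly 2(n−1). -/

import Mathlib

/- Edges on the universal cover of the half-cylinder, modeled by the integers.
   An edge is an unordered pair of distinct integers, represented as an ordered
   pair `(a, b)` with `a < b` (validity). -/

namespace Multitriangulation

abbrev Edge := ℤ × ℤ

/-- Translate an edge by `t`: `[a,b] + t = [a+t, b+t]`. -/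
def shift (e : Edge) (t : ℤ) : Edge := (e.1 + t, e.2 + t)

/-- Two edges (as unordered pairs of integers) cross:
their endpoints strictly interleave. -/
def Crosses (e f : Edge) : Prop :=
  (min e.1 e.2 < min f.1 f.2 ∧ min f.1 f.2 < max e.1 e.2 ∧ max e.1 e.2 < max f.1 f.2) ∨
  (min f.1 f.2 < min e.1 e.2 ∧ min e.1 e.2 < max f.1 f.2 ∧ max f.1 f.2 < max e.1 e.2)

/-- A finite set of edges is an `l`-crossing if it consists of `l` pairwise
crossing edges. -/
def IsCrossing (l : ℕ) (S : Finset Edge) : Prop :=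
  S.card = l ∧ ∀ e ∈ S, ∀ f ∈ S, e ≠ f → Crosses e f

/-- A set of edges is `l`-crossing-free if no `l` of its edges pairwise cross. -/
def CrossingFree (l : ℕ) (E : Set Edge) : Prop :=
  ¬ ∃ S : Finset Edge, ↑S ⊆ E ∧ IsCrossing l S

/-- A set of edges is `n`-periodic if `e ∈ E ↔ e + n ∈ E`. -/
def Periodic (n : ℕ) (E : Set Edge) : Prop := ∀ e, e ∈ E ↔ shift e (n : ℤ) ∈ E

/-- All members are genuine edges `[a,b]` with `a < b`. -/
def ValidEdges (E : Set Edge) : Prop := ∀ e ∈ E, e.1 < e.2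

/-- An `n`-periodic `k`-triangulation on `ℤ`: an `n`-periodic
`(k+1)`-crossing-free set of edges that is maximal under inclusion among
`n`-periodic `(k+1)`-crossing-free sets of edges. -/
def IsTriangulation (n k : ℕ) (T : Set Edge) : Prop :=
  ValidEdges T ∧ Periodic n T ∧ CrossingFree (k+1) T ∧
  ∀ T', ValidEdges T' → Periodic n T' → CrossingFree (k+1) T' → T ⊆ T' → T' = T

/-- Interleaving of representatives `0 ≤ a < b < m`, `0 ≤ c < d < m`:
`a<c<b<d` or `c<a<d<b` (formulated symmetrically via `min`/`max`). -/
def crossIndex (a b c d : ℕ) : Prop :=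
  (min a b < min c d ∧ min c d < max a b ∧ max a b < max c d) ∨
  (min c d < min a b ∧ min a b < max c d ∧ max c d < max a b)

/-- Two edges of the `m`-gon (vertices labeled by `ZMod m`) cross: their
endpoints interleave in cyclic order, via the representatives in `[0, m)`. -/
def PolyCrosses {m : ℕ} (e f : Sym2 (ZMod m)) : Prop :=
  ∃ x y z w : ZMod m, e = s(x, y) ∧ f = s(z, w) ∧ crossIndex x.val y.val z.val w.val

/-- A finite set of polygon edges is an `l`-crossing if it consists of `l`
pairwise crossing edges. -/
def PolyIsCrossing {m : ℕ} (l : ℕ) (S : Finset (Sym2 (ZMod m))) : Prop :=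
  S.card = l ∧ ∀ e ∈ S, ∀ f ∈ S, e ≠ f → PolyCrosses e f

/-- A set of polygon edges is `l`-crossing-free. -/
def PolyCrossingFree {m : ℕ} (l : ℕ) (E : Set (Sym2 (ZMod m))) : Prop :=
  ¬ ∃ S : Finset (Sym2 (ZMod m)), ↑S ⊆ E ∧ PolyIsCrossing l S

/-- Invariance under the rotation `v ↦ v + n`. -/
def PolyPeriodic (n : ℕ) {m : ℕ} (T : Set (Sym2 (ZMod m))) : Prop :=
  ∀ e, e ∈ T ↔ Sym2.map (· + (n : ZMod m)) e ∈ T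

/-- All members are genuine edges (pairs of distinct vertices). -/
def PolyValid {m : ℕ} (T : Set (Sym2 (ZMod m))) : Prop := ∀ e ∈ T, ¬ e.IsDiag

/-- A `2`-triangulation on the `m`-gon: a 3-crossing-free set of edges,
maximal under inclusion among 3-crossing-free sets of edges. -/
def IsPolyTriangulation {m : ℕ} (T : Set (Sym2 (ZMod m))) : Prop :=
  PolyValid T ∧ PolyCrossingFree 3 T ∧
  ∀ T', PolyValid T' → PolyCrossingFree 3 T' → T ⊆ T' → T' = T

/-- An edge of the `4n`-gon is 2-relevant: its endpoints have representatives
`0 ≤ a < b < 4n` with `2 < b − a < 4n − 2`. -/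
def PolyRelevant (n : ℕ) (e : Sym2 (ZMod (4 * n))) : Prop :=
  ∃ a b : ℕ, a < b ∧ b < 4 * n ∧
    e = s(((a : ZMod (4 * n))), ((b : ZMod (4 * n)))) ∧
    2 < b - a ∧ b - a < 4 * n - 2

/-- The rotation orbit `ẽ = {e, e+n, e+2n, e+3n}` of an edge of the `4n`-gon. -/
def tilde (n : ℕ) (e : Sym2 (ZMod (4 * n))) : Set (Sym2 (ZMod (4 * n))) :=
  {e, Sym2.map (· + ((n : ℕ) : ZMod (4 * n))) e,
    Sym2.map (· + ((2 * n : ℕ) : ZMod (4 * n))) e,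
    Sym2.map (· + ((3 * n : ℕ) : ZMod (4 * n))) e}

/-- An `n`-periodic 2-triangulation on the `4n`-gon. -/
def IsPeriodicPolyTriangulation (n : ℕ) (T : Set (Sym2 (ZMod (4 * n)))) : Prop :=
  IsPolyTriangulation T ∧ PolyPeriodic n T

end Multitriangulation

namespace Multitriangulation

/-- No two crossing edges of `E` both cross the pair `(i,j)`. -/
def Free (m : ℤ) (E : ℤ → ℤ → Prop) (i j : ℤ) : Prop :=
  ∀ a c b d, i < a → a < c → c < j → j < b → b < d → d < i + m → E a b → E c d → False

/-- Lift of a `2`-triangulation of the `m`-gon to the integers. -/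
structure Tri (m : ℤ) (E : ℤ → ℤ → Prop) : Prop where
  lt : ∀ {i j}, E i j → i < j
  lt' : ∀ {i j}, E i j → j < i + m
  sw : ∀ {i j}, E i j → E j (i + m)
  sw' : ∀ {i j}, E j (i + m) → E i j
  cf : ∀ {i j}, E i j → Free m E i j
  mx : ∀ {i j}, i < j → j < i + m → Free m E i j → E i j

theorem cgE {E : ℤ → ℤ → Prop} {i j i' j' : ℤ} (h : E i j) (h1 : i = i') (h2 : j = j') :
    E i' j' := h1 ▸ h2 ▸ h

theorem Tri.x3 {m : ℤ} {E : ℤ → ℤ → Prop} (h : Tri m E) {a b c d e f : ℤ}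
    (h1 : E a d) (h2 : E b e) (h3 : E c f)
    (k1 : a < b) (k2 : b < c) (k3 : c < d) (k4 : d < e) (k5 : e < f) (k6 : f < a + m) : False :=
  h.cf h1 _ _ _ _ k1 k2 k3 k4 k5 k6 h2 h3

theorem Tri.ex {m : ℤ} {E : ℤ → ℤ → Prop} (h : Tri m E) {v t : ℤ} (h1 : ¬ E v t) (h2 : v < t)
    (h3 : t < v + m) : ∃ a c b d, v < a ∧ a < c ∧ c < t ∧ t < b ∧ b < d ∧ d < v + m ∧
      E a b ∧ E c d := by
  by_contra hc
  apply h1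
  apply h.mx h2 h3
  intro a c b d k1 k2 k3 k4 k5 k6 k7 k8
  exact hc ⟨a, c, b, d, k1, k2, k3, k4, k5, k6, k7, k8⟩

/-- Backwards swap. -/
theorem Tri.sb {m : ℤ} {E : ℤ → ℤ → Prop} (h : Tri m E) {i j k : ℤ} (h1 : E j k)
    (h2 : k = i + m) : E i j := h.sw' (h2 ▸ h1)

/-- Forwards swap. -/
theorem Tri.sf {m : ℤ} {E : ℤ → ℤ → Prop} (h : Tri m E) {i j k : ℤ} (h1 : E i j)
    (h2 : k = i + m) : E j k := h2 ▸ h.sw h1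

/-- Change the lift of an edge. -/
theorem Tri.md {m : ℤ} {E : ℤ → ℤ → Prop} (h : Tri m E) {i j i' j' : ℤ} (h1 : E i j)
    (h2 : (i' = i ∧ j' = j) ∨ (i' = j ∧ j' = i + m) ∨ (i' = i + m ∧ j' = j + m) ∨
      (i' = j - m ∧ j' = i) ∨ (i' = i - m ∧ j' = j - m)) : E i' j' := by
  have key : ∀ {i j}, E i j → E (i - m) (j - m) := fun {i j} k =>
    h.sb (h.sb (i := j - m) k (by omega)) (by omega)
  rcases h2 with ⟨rfl, rfl⟩ | ⟨rfl, rfl⟩ | ⟨rfl, rfl⟩ | ⟨rfl, rfl⟩ | ⟨rfl, rfl⟩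
  · exact h1
  · exact h.sw h1
  · exact h.sw (h.sw h1)
  · exact h.sb h1 (by omega)
  · exact key h1

theorem Tri.short {m : ℤ} {E : ℤ → ℤ → Prop} (h : Tri m E) {v t : ℤ}
    (h1 : v < t) (h2 : t < v + m) (h3 : t ≤ v + 2 ∨ v + m - 2 ≤ t) : E v t := by
  apply h.mx h1 h2
  intro a c b d
  omega

/-- The mirror image. -/
def Mir (E : ℤ → ℤ → Prop) (i j : ℤ) : Prop := E (-j) (-i)

theorem Mir_Mir (E : ℤ → ℤ → Prop) : Mir (Mir E) = E := by
  funext i j; simp [Mir]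

theorem Free.mir {m : ℤ} {E : ℤ → ℤ → Prop} (hs : ∀ {i j}, E i j → E j (i + m))
    {i j : ℤ} (h : Free m E (-j) (-i)) : Free m (Mir E) i j := by
  intro a c b d k1 k2 k3 k4 k5 k6 k7 k8
  have e1 := hs k7
  have e2 := hs k8
  exact h (-c) (-a) (-d + m) (-b + m) (by omega) (by omega) (by omega) (by omega) (by omega)
    (by omega) e2 e1

theorem Tri.mir {m : ℤ} {E : ℤ → ℤ → Prop} (h : Tri m E) : Tri m (Mir E) where
  lt := fun k => by have := h.lt k; omega
  lt' := fun k => by have := h.lt' k; omega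
  sw := fun {i j} k => h.sb (i := -(i+m)) k (by omega)
  sw' := fun {i j} k => show E (-j) (-i) from cgE (h.sw (i := -(i+m)) (j := -j) k) rfl (by omega)
  cf := fun k => Free.mir h.sw (h.cf k)
  mx := fun {i j} k1 k2 k3 => by
    apply h.mx (by omega) (by omega)
    intro a c b d l1 l2 l3 l4 l5 l6 l7 l8
    have e1 := h.sw l7
    have e2 := h.sw l8
    refine k3 (-c) (-a) (-d + m) (-b + m) (by omega) (by omega) (by omega) (by omega) (by omega)
      (by omega) ?_ ?_
    · exact h.sb (i := -(-d+m)) (j := - - c) (cgE l8 (by omega) rfl) (by omega)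
    · exact h.sb (i := -(-b+m)) (j := - - a) (cgE l7 (by omega) rfl) (by omega)

theorem Tri.c1 {m : ℤ} {E : ℤ → ℤ → Prop} (h : Tri m E) {v u w : ℤ} (_hu : E v u) (hw : E v w)
    (h1 : u < w) (h2 : v + 2 ≤ u) (h3 : w ≤ v + m - 2) (hn : ∀ t, u < t → t < w → ¬ E v t) :
    ∃ a, v < a ∧ a < u ∧ E a w := by
  by_cases hc : w = u + 1
  · exact ⟨u - 1, by omega, by omega, h.short (by omega) (by omega) (by omega)⟩
  have key : ∀ k : ℕ, ∀ b, b + k = w → u < b → (∃ a, v < a ∧ a < u ∧ E a b) →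
      ∃ a, v < a ∧ a < u ∧ E a w := by
    intro k
    induction k using Nat.strong_induction_on with
    | _ k ih =>
      intro b hb hub ⟨a, ha1, ha2, hab⟩
      by_cases hk : k = 0
      · exact ⟨a, ha1, ha2, cgE hab rfl (by omega)⟩
      obtain ⟨a2, c2, b2, d2, l1, l2, l3, l4, l5, l6, l7, l8⟩ :=
        h.ex (hn b hub (by omega)) (by omega) (by omega)
      have q1 : b2 ≤ w := by
        by_contra q
        exact h.x3 hw l7 l8 l1 l2 (by omega) (by omega) l5 l6
      have q2 : a2 < u := by
        by_contra q
        exact h.x3 hab l7 l8 (by omega) l2 (by omega) (by omega) l5 (by omega)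
      exact ih (w - b2).toNat (by omega) b2 (by omega) (by omega) ⟨a2, l1, q2, l7⟩
  obtain ⟨a2, c2, b2, d2, l1, l2, l3, l4, l5, l6, l7, l8⟩ :=
    h.ex (hn (u+1) (by omega) (by omega)) (by omega) (by omega)
  have q1 : b2 ≤ w := by
    by_contra q
    exact h.x3 hw l7 l8 l1 l2 (by omega) (by omega) l5 l6
  exact key (w - b2).toNat b2 (by omega) (by omega) ⟨a2, l1, by omega, l7⟩

theorem Tri.c2 {m : ℤ} {E : ℤ → ℤ → Prop} (h : Tri m E) {v u w : ℤ} (hu : E v u) (hw : E v w)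
    (h1 : u < w) (h2 : v + 2 ≤ u) (h3 : w ≤ v + m - 2) (hn : ∀ t, u < t → t < w → ¬ E v t) :
    ∃ d, w < d ∧ d < v + m ∧ E u d := by
  obtain ⟨a, k1, k2, k3⟩ := h.mir.c1 (v := -v) (u := m - w) (w := m - u)
    (h.sb (i := -(m-w)) (j := - -v) (k := w) (cgE hw (by omega) rfl) (by omega))
    (h.sb (i := -(m-u)) (j := - -v) (k := u) (cgE hu (by omega) rfl) (by omega))
    (by omega) (by omega) (by omega) (by
      intro t p1 p2 p3
      exact hn (m - t) (by omega) (by omega) (cgE (h.sw p3) (by omega) (by omega)))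
  refine ⟨m - a, by omega, by omega, ?_⟩
  exact h.md (i := -(m-u)) (j := -a) k3 (by omega)

end Multitriangulation

namespace Multitriangulation

/-- A `2`-star (pentagram) of `E`. -/
structure Star (m : ℤ) (E : ℤ → ℤ → Prop) (s0 s1 s2 s3 s4 : ℤ) : Prop where
  l0 : s0 < s1
  l1 : s1 < s2
  l2 : s2 < s3
  l3 : s3 < s4
  l4 : s4 < s0 + m
  e02 : E s0 s2
  e03 : E s0 s3
  e13 : E s1 s3
  e14 : E s1 s4
  e24 : E s2 s4

theorem exists_min (P : ℤ → Prop) (lo a : ℤ) (h1 : lo < a) (h2 : P a) :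
    ∃ b, lo < b ∧ b ≤ a ∧ P b ∧ ∀ t, lo < t → t < b → ¬ P t := by
  classical
  obtain ⟨b, ⟨hb1, hb2⟩, hb3⟩ := Int.exists_least_of_bdd (P := fun x => lo < x ∧ P x)
    ⟨lo, fun z hz => hz.1.le⟩ ⟨a, h1, h2⟩
  refine ⟨b, hb1, hb3 a ⟨h1, h2⟩, hb2, fun t ht1 ht2 ht3 => ?_⟩
  have := hb3 t ⟨ht1, ht3⟩
  omega

theorem exists_max (P : ℤ → Prop) (hi a : ℤ) (h1 : a < hi) (h2 : P a) :
    ∃ b, b < hi ∧ a ≤ b ∧ P b ∧ ∀ t, b < t → t < hi → ¬ P t := by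
  obtain ⟨b, k1, k2, k3, k4⟩ := exists_min (fun x => P (-x)) (-hi) (-a) (by omega) (by simpa using h2)
  refine ⟨-b, by omega, by omega, k3, fun t ht1 ht2 ht3 => ?_⟩
  exact k4 (-t) (by omega) (by omega) (by simpa using ht3)

variable {m : ℤ} {E : ℤ → ℤ → Prop}

theorem Star.rot {s0 s1 s2 s3 s4 : ℤ} (hE : Tri m E) (h : Star m E s0 s1 s2 s3 s4) :
    Star m E s1 s2 s3 s4 (s0 + m) :=
  ⟨h.l1, h.l2, h.l3, h.l4, by linarith [h.l0], h.e13, h.e14, h.e24, hE.sw h.e02, hE.sw h.e03⟩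

theorem Star.emp {s0 s1 s2 s3 s4 : ℤ} (hE : Tri m E) (h : Star m E s0 s1 s2 s3 s4) {t : ℤ}
    (h1 : s2 < t) (h2 : t < s3) (h3 : E s0 t) : False :=
  hE.x3 h3 h.e13 h.e24 h.l0 h.l1 h1 h2 h.l3 h.l4

/-- Shift of a star by a multiple of the polygon size. -/
theorem Star.md {s0 s1 s2 s3 s4 t0 t1 t2 t3 t4 : ℤ} (hE : Tri m E) (h : Star m E s0 s1 s2 s3 s4)
    (q : ℤ) (hq : q = 0 ∨ q = m ∨ q = -m) (h0 : t0 = s0 + q) (h1 : t1 = s1 + q) (h2 : t2 = s2 + q)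
    (h3 : t3 = s3 + q) (h4 : t4 = s4 + q) : Star m E t0 t1 t2 t3 t4 := by
  obtain ⟨l0, l1, l2, l3, l4, e02, e03, e13, e14, e24⟩ := h
  have key : ∀ {i j}, E i j → E (i + q) (j + q) := by
    intro i j k
    rcases hq with rfl | rfl | rfl
    · exact hE.md k (by omega)
    · exact hE.md k (by omega)
    · exact hE.md k (by omega)
  subst h0 h1 h2 h3 h4
  exact ⟨by linarith, by linarith, by linarith, by linarith, by linarith,
    key e02, key e03, key e13, key e14, key e24⟩

theorem Tri.star (h : Tri m E) {v u w : ℤ} (hu : E v u) (hw : E v w)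
    (h1 : u < w) (h2 : v + 2 ≤ u) (h3 : w ≤ v + m - 2) (hn : ∀ t, u < t → t < w → ¬ E v t) :
    ∃ a d, Star m E v a u w d := by
  obtain ⟨a0, ha1, ha2, ha3⟩ := h.c1 hu hw h1 h2 h3 hn
  obtain ⟨d0, hd1, hd2, hd3⟩ := h.c2 hu hw h1 h2 h3 hn
  obtain ⟨a, a1, a2, a3, a4⟩ := exists_min (fun x => E x w) v a0 ha1 ha3
  obtain ⟨d, d1, d2, d3, d4⟩ := exists_max (fun x => E u x) (v + m) d0 hd2 hd3
  obtain ⟨x, x1, x2, x3⟩ := h.c1 (h.sw hw) (h.sw a3) (by omega) (by omega) (by omega) (by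
    intro t t1 t2 t3
    exact a4 (t - m) (by omega) (by omega) (h.md t3 (by omega)))
  obtain ⟨z', z1, z2, z3⟩ := h.c2 d3 (h.sw hu) (by omega) (by omega) (by omega) d4
  obtain ⟨z, rfl⟩ : ∃ z, z' = z + m := ⟨z' - m, by omega⟩
  have x3' : E a x := h.sb x3 rfl
  have z3' : E z d := h.sb z3 rfl
  have q1 : d ≤ x := by
    by_contra q
    exact h.x3 d3 (h.sw hw) x3 (by omega) (by omega) (by omega) (by omega) (by omega) (by omega)
  have q2 : z ≤ a := by
    by_contra q
    exact h.x3 hu a3 z3' (by omega) (by omega) (by omega) (by omega) (by omega) (by omega)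
  refine ⟨a, d, by omega, by omega, h1, by omega, d1, hu, hw, a3, ?_, d3⟩
  by_cases c1 : d = x
  · rw [c1]; exact x3'
  by_cases c2 : z = a
  · rw [← c2]; exact z3'
  exact (h.x3 hu z3' x3' (by omega) (by omega) (by omega) (by omega) (by omega) (by omega)).elim

theorem Tri.rstar (h : Tri m E) {v t : ℤ} (ht : E v t) (h2 : v + 2 ≤ t) (h3 : t < v + m - 2) :
    ∃ a b c, Star m E v a t b c := by
  obtain ⟨b, b1, b2, b3, b4⟩ := exists_min (fun x => E v x) t (v + m - 2) h3
    (h.short (by omega) (by omega) (by omega))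
  obtain ⟨a, d, hs⟩ := h.star ht b3 b1 h2 b2 b4
  exact ⟨a, b, d, hs⟩

theorem Tri.lstar (h : Tri m E) {v t : ℤ} (ht : E v t) (h2 : v + 2 < t) (h3 : t ≤ v + m - 2) :
    ∃ a b c, Star m E v a b t c := by
  obtain ⟨b, b1, b2, b3, b4⟩ := exists_max (fun x => E v x) t (v + 2) h2
    (h.short (by omega) (by omega) (by omega))
  obtain ⟨a, d, hs⟩ := h.star b3 ht b1 b2 h3 b4
  exact ⟨a, b, d, hs⟩

/-- The star at `v` met by the direction `t` (half-open version). -/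
theorem Tri.hstar (h : Tri m E) {v t : ℤ} (h2 : v + 2 < t) (h3 : t ≤ v + m - 2) :
    ∃ a u w d, Star m E v a u w d ∧ u < t ∧ t ≤ w := by
  obtain ⟨u, u1, u2, u3, u4⟩ := exists_max (fun x => E v x) t (v + 2) h2
    (h.short (by omega) (by omega) (by omega))
  obtain ⟨b, b1, b2, b3, b4⟩ := exists_min (fun x => E v x) (t - 1) (v + m - 2) (by omega)
    (h.short (by omega) (by omega) (by omega))
  obtain ⟨a, d, hs⟩ := h.star u3 b3 (by omega) u2 b2 (by
    intro s s1 s2 s3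
    by_cases c : s < t
    · exact u4 s s1 c s3
    · exact b4 s (by omega) s2 s3)
  exact ⟨a, u, b, d, hs, u1, by omega⟩

theorem Tri.nstar (h : Tri m E) {v t : ℤ} (ht : ¬ E v t) (h2 : v < t) (h3 : t < v + m) :
    ∃ a u w d, Star m E v a u w d ∧ u < t ∧ t < w := by
  obtain ⟨a, u, w, d, k1, k2, k3⟩ := h.hstar (v := v) (t := t)
    (by by_contra c; exact ht (h.short (by omega) (by omega) (by omega)))
    (by by_contra c; exact ht (h.short (by omega) (by omega) (by omega)))
  refine ⟨a, u, w, d, k1, k2, ?_⟩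
  by_contra c
  have : t = w := by omega
  subst this
  exact ht k1.e03

theorem Star.uniq0 {v a u w d a' d' : ℤ} (hE : Tri m E) (h : Star m E v a u w d)
    (h' : Star m E v a' u w d') : a ≤ a' ∧ d' ≤ d := by
  constructor
  · by_contra c
    exact ((h.rot hE).rot hE).rot hE |>.emp hE (t := a' + m) (by linarith [h'.l0]) (by omega)
      (hE.sw h'.e13)
  · by_contra c
    exact ((h.rot hE).rot hE).emp hE (t := d') (by omega) h'.l4 h'.e24

theorem Star.uniqR {v a u w d a' w' d' : ℤ} (hE : Tri m E) (h : Star m E v a u w d)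
    (h' : Star m E v a' u w' d') : a = a' ∧ w = w' ∧ d = d' := by
  have hw : w = w' := by
    rcases lt_trichotomy w w' with c | c | c
    · exact (h'.emp hE h.l2 c h.e03).elim
    · exact c
    · exact (h.emp hE h'.l2 c h'.e03).elim
  subst hw
  have k1 := h.uniq0 hE h'
  have k2 := h'.uniq0 hE h
  omega

theorem Star.uniqL {v a u w d a' u' d' : ℤ} (hE : Tri m E) (h : Star m E v a u w d)
    (h' : Star m E v a' u' w d') : a = a' ∧ u = u' ∧ d = d' := by
  have hw : u = u' := by
    rcases lt_trichotomy u u' with c | c | c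
    · exact (h.emp hE c h'.l2 h'.e02).elim
    · exact c
    · exact (h'.emp hE c h.l2 h.e02).elim
  subst hw
  have k1 := h.uniq0 hE h'
  have k2 := h'.uniq0 hE h
  omega

/-- A star is determined by its first vertex and any strictly bisecting (half-open) direction. -/
theorem Star.uniqH {v a u w d a' u' w' d' t : ℤ} (hE : Tri m E) (h : Star m E v a u w d)
    (h' : Star m E v a' u' w' d') (h1 : u < t) (h2 : t ≤ w) (h3 : u' < t) (h4 : t ≤ w') :
    a = a' ∧ u = u' ∧ w = w' ∧ d = d' := by
  have hw : w = w' := by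
    rcases lt_trichotomy w w' with c | c | c
    · exact (h'.emp hE (by omega) c h.e03).elim
    · exact c
    · exact (h.emp hE (by omega) c h'.e03).elim
  subst hw
  have := h.uniqL hE h'
  omega

end Multitriangulation

namespace Multitriangulation

/-- `(i,j)` is a lift of a translate of the edge `(v,t)` by a multiple of `p`. -/
def Orb (m p v t i j : ℤ) : Prop :=
  ∃ q, p ∣ q ∧ ((i = v + q ∧ j = t + q) ∨ (i = t + q ∧ j = v + m + q))

/-- Invariance under translation by multiples of `p`. -/
def Per (p : ℤ) (E : ℤ → ℤ → Prop) : Prop := ∀ i j q, p ∣ q → E i j → E (i + q) (j + q)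

/-- Closure under change of lift. -/
structure Sw (m : ℤ) (E : ℤ → ℤ → Prop) : Prop where
  sw : ∀ {i j}, E i j → E j (i + m)
  sw' : ∀ {i j}, E j (i + m) → E i j

theorem Sw.md {m : ℤ} {E : ℤ → ℤ → Prop} (h : Sw m E) {i j i' j' : ℤ} (h1 : E i j)
    (h2 : (i' = i ∧ j' = j) ∨ (i' = j ∧ j' = i + m) ∨ (i' = i + m ∧ j' = j + m) ∨
      (i' = j - m ∧ j' = i) ∨ (i' = i - m ∧ j' = j - m)) : E i' j' := by
  have sb : ∀ {i j k : ℤ} (_ : E j k) (_ : k = i + m), E i j :=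
    fun {i j k} h1 h2 => h.sw' (h2 ▸ h1)
  rcases h2 with ⟨rfl, rfl⟩ | ⟨rfl, rfl⟩ | ⟨rfl, rfl⟩ | ⟨rfl, rfl⟩ | ⟨rfl, rfl⟩
  · exact h1
  · exact h.sw h1
  · exact h.sw (h.sw h1)
  · exact sb h1 (by omega)
  · exact sb (sb (i := j - m) h1 (by omega)) (by omega)

/-- Remove the orbit of an edge. -/
def Rem (m p : ℤ) (E : ℤ → ℤ → Prop) (v t i j : ℤ) : Prop := E i j ∧ ¬ Orb m p v t i j

/-- Replace the orbit of `(v,t)` by the one of `(x,y)`. -/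
def Flip (m p : ℤ) (E : ℤ → ℤ → Prop) (v t x y i j : ℤ) : Prop :=
  Rem m p E v t i j ∨ Orb m p x y i j

variable {m p : ℤ} {E : ℤ → ℤ → Prop}

theorem Orb.self (m p v t : ℤ) : Orb m p v t v t := ⟨0, dvd_zero _, by omega⟩

theorem Orb.sw {v t i j : ℤ} (hp : p ∣ m) (h : Orb m p v t i j) : Orb m p v t j (i + m) := by
  obtain ⟨q, hq, ⟨rfl, rfl⟩ | ⟨rfl, rfl⟩⟩ := h
  · exact ⟨q, hq, by omega⟩
  · exact ⟨q + m, dvd_add hq hp, by omega⟩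

theorem Orb.sh {v t i j s : ℤ} (h : Orb m p v t i j) (hs : p ∣ s) :
    Orb m p v t (i + s) (j + s) := by
  obtain ⟨q, hq, ⟨rfl, rfl⟩ | ⟨rfl, rfl⟩⟩ := h
  · exact ⟨q + s, dvd_add hq hs, by omega⟩
  · exact ⟨q + s, dvd_add hq hs, by omega⟩

theorem Orb.sw' {v t i j : ℤ} (hp : p ∣ m) (h : Orb m p v t j (i + m)) : Orb m p v t i j := by
  have := (h.sw hp).sh (s := -m) ((Int.dvd_neg).2 hp)
  exact cgE this (by omega) (by omega)

theorem Orb.symm {v t i j : ℤ} (hp : p ∣ m) (h : Orb m p v t i j) : Orb m p i j v t := by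
  obtain ⟨q, hq, ⟨rfl, rfl⟩ | ⟨rfl, rfl⟩⟩ := h
  · exact ⟨-q, (Int.dvd_neg).2 hq, by omega⟩
  · exact ⟨-q - m, dvd_sub ((Int.dvd_neg).2 hq) hp, by omega⟩

theorem Orb.sub {v t i j : ℤ} {F : ℤ → ℤ → Prop} (hF : Sw m F) (hP : Per p F)
    (h : Orb m p v t i j) (hv : F v t) : F i j := by
  obtain ⟨q, hq, ⟨rfl, rfl⟩ | ⟨rfl, rfl⟩⟩ := h
  · exact hP _ _ _ hq hv
  · exact hP _ _ _ hq (hF.sw hv)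

theorem Orb.isSw {v t : ℤ} (hp : p ∣ m) : Sw m (Orb m p v t) :=
  ⟨fun h => h.sw hp, fun h => h.sw' hp⟩

theorem Tri.isSw (h : Tri m E) : Sw m E := ⟨h.sw, h.sw'⟩

theorem Orb.per {v t : ℤ} : Per p (Orb m p v t) := fun _ _ _ hq h => h.sh hq

theorem Rem.isSw {v t : ℤ} (hE : Tri m E) (hp : p ∣ m) : Sw m (Rem m p E v t) :=
  ⟨fun h => ⟨hE.sw h.1, fun k => h.2 (k.sw' hp)⟩, fun h => ⟨hE.sw' h.1, fun k => h.2 (k.sw hp)⟩⟩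

theorem Rem.per {v t : ℤ} (hP : Per p E) : Per p (Rem m p E v t) := by
  intro i j q hq h
  refine ⟨hP _ _ _ hq h.1, fun k => h.2 ?_⟩
  exact cgE (k.sh ((Int.dvd_neg).2 hq)) (by omega) (by omega)

theorem Flip.isSw {v t x y : ℤ} (hE : Tri m E) (hp : p ∣ m) : Sw m (Flip m p E v t x y) :=
  ⟨fun h => h.imp (Rem.isSw hE hp).sw (Orb.sw hp), fun h => h.imp (Rem.isSw hE hp).sw' (Orb.sw' hp)⟩

theorem Flip.per {v t x y : ℤ} (hP : Per p E) : Per p (Flip m p E v t x y) :=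
  fun i j q hq h => h.imp (Rem.per hP i j q hq) (Orb.per i j q hq)

theorem Per.of_tri (h : Tri m E) : Per m E := by
  have key : ∀ k : ℕ, ∀ i j, (E i j → E (i + k * m) (j + k * m)) ∧
      (E i j → E (i - k * m) (j - k * m)) := by
    intro k
    induction k with
    | zero => intro i j; simp
    | succ k ih =>
      intro i j
      constructor
      · intro h1
        exact cgE (h.md ((ih i j).1 h1) (Or.inr (Or.inr (Or.inl ⟨rfl, rfl⟩))))
          (by push_cast; ring) (by push_cast; ring)
      · intro h1
        exact cgE (h.md ((ih i j).2 h1) (Or.inr (Or.inr (Or.inr (Or.inr ⟨rfl, rfl⟩)))))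
          (by push_cast; ring) (by push_cast; ring)
  rintro i j q ⟨k, rfl⟩ h1
  rcases le_total 0 k with hk | hk
  · lift k to ℕ using hk
    exact cgE ((key k i j).1 h1) (by ring) (by ring)
  · obtain ⟨k', rfl⟩ : ∃ k', k = -k' := ⟨-k, by ring⟩
    have : 0 ≤ k' := by omega
    lift k' to ℕ using this
    exact cgE ((key k' i j).2 h1) (by ring) (by ring)

theorem Free.sw {F : ℤ → ℤ → Prop} {i j : ℤ} (hF : Sw m F) (h : Free m F i j) :
    Free m F j (i + m) := by
  intro a c b d k1 k2 k3 k4 k5 k6 k7 k8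
  exact h (b - m) (d - m) a c (by omega) (by omega) (by omega) (by omega) (by omega) (by omega)
    (hF.md k7 (Or.inr (Or.inr (Or.inr (Or.inl ⟨rfl, rfl⟩)))))
    (hF.md k8 (Or.inr (Or.inr (Or.inr (Or.inl ⟨rfl, rfl⟩)))))

theorem Free.sh {F : ℤ → ℤ → Prop} {i j q : ℤ} (hF : Per p F) (hq : p ∣ q) (h : Free m F i j) :
    Free m F (i + q) (j + q) := by
  intro a c b d k1 k2 k3 k4 k5 k6 k7 k8
  have hq' := (Int.dvd_neg).2 hq
  exact h (a + -q) (c + -q) (b + -q) (d + -q) (by omega) (by omega) (by omega) (by omega)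
    (by omega) (by omega) (hF _ _ _ hq' k7) (hF _ _ _ hq' k8)

theorem Free.orb {F : ℤ → ℤ → Prop} {v t i j : ℤ} (hF : Sw m F) (hP : Per p F)
    (h : Free m F v t) (ho : Orb m p v t i j) : Free m F i j := by
  obtain ⟨q, hq, ⟨rfl, rfl⟩ | ⟨rfl, rfl⟩⟩ := ho
  · exact h.sh hP hq
  · exact (h.sw hF).sh hP hq

theorem Free.mono {F G : ℤ → ℤ → Prop} {i j : ℤ} (h : Free m F i j)
    (hGF : ∀ a b, G a b → F a b) : Free m G i j :=
  fun a c b d k1 k2 k3 k4 k5 k6 k7 k8 => h a c b d k1 k2 k3 k4 k5 k6 (hGF _ _ k7) (hGF _ _ k8)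

theorem Star.sh {s0 s1 s2 s3 s4 q : ℤ} (hP : Per p E) (hq : p ∣ q) (h : Star m E s0 s1 s2 s3 s4) :
    Star m E (s0 + q) (s1 + q) (s2 + q) (s3 + q) (s4 + q) :=
  ⟨by linarith [h.l0], by linarith [h.l1], by linarith [h.l2], by linarith [h.l3],
    by linarith [h.l4], hP _ _ _ hq h.e02, hP _ _ _ hq h.e03, hP _ _ _ hq h.e13, hP _ _ _ hq h.e14,
    hP _ _ _ hq h.e24⟩

/-- The two stars adjacent to the edge `(v,t)`. -/
structure Adj (m : ℤ) (E : ℤ → ℤ → Prop) (v t a b c a1 b1 c1 : ℤ) : Prop where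
  R : Star m E v a t b c
  S : Star m E v a1 b1 t c1

theorem Adj.swap {v t a b c a1 b1 c1 : ℤ} (hE : Tri m E) (h : Adj m E v t a b c a1 b1 c1) :
    Adj m E t (v + m) c1 (a1 + m) (b1 + m) b c (a + m) :=
  ⟨((h.S.rot hE).rot hE).rot hE, (h.R.rot hE).rot hE⟩

theorem Adj.cases {v t a b c a1 b1 c1 : ℤ} (hE : Tri m E) (h : Adj m E v t a b c a1 b1 c1) :
    (a ≤ a1 ∧ c1 ≤ b) ∨ (b1 ≤ a ∧ c ≤ c1) := by
  obtain ⟨⟨r0, r1, r2, r3, r4, e02, e03, e13, e14, e24⟩, ⟨s0, s1, s2, s3, s4, f02, f03, f13, f14, f24⟩⟩ := h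
  have q1 : a < a1 → c1 ≤ b := by
    intro k; by_contra q
    exact hE.x3 e02 e13 f14 (by omega) (by omega) (by omega) (by omega) (by omega) (by omega)
  have q2 : a1 < a → c ≤ c1 := by
    intro k; by_contra q
    exact hE.x3 e02 f14 e14 (by omega) (by omega) (by omega) (by omega) (by omega) (by omega)
  have q3 : a < b1 → c1 ≤ b := by
    intro k; by_contra q
    exact hE.x3 e02 e13 f24 (by omega) (by omega) (by omega) (by omega) (by omega) (by omega)
  have q4 : b1 < a → c ≤ c1 := by
    intro k; by_contra q
    exact hE.x3 e02 f24 e14 (by omega) (by omega) (by omega) (by omega) (by omega) (by omega)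
  omega

theorem Tri.adj (h : Tri m E) {v t : ℤ} (ht : E v t) (h2 : v + 2 < t) (h3 : t < v + m - 2) :
    ∃ a b c a1 b1 c1, Adj m E v t a b c a1 b1 c1 := by
  obtain ⟨a, b, c, h1⟩ := h.rstar ht h2.le h3
  obtain ⟨a1, b1, c1, h4⟩ := h.lstar ht h2 h3.le
  exact ⟨a, b, c, a1, b1, c1, h1, h4⟩

/-- Every new edge compatible with the remaining ones bisects one of the adjacent stars. -/
theorem bisect {v t a b c a1 b1 c1 h0 h1 : ℤ} (hE : Tri m E) (hP : Per p E)
    (hA : Adj m E v t a b c a1 b1 c1) (hh : ¬ E h0 h1) (hl : h0 < h1) (hl' : h1 < h0 + m)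
    (hf : Free m (Rem m p E v t) h0 h1) :
    ∃ q, p ∣ q ∧ ((h0 + q = c - m ∧ a < h1 + q ∧ h1 + q < t) ∨
      (h0 + q = b - m ∧ v < h1 + q ∧ h1 + q < a) ∨
      (h0 + q = b1 ∧ c1 < h1 + q ∧ h1 + q < v + m) ∨
      (h0 + q = a1 ∧ t < h1 + q ∧ h1 + q < c1)) := by
  obtain ⟨s1, s2, s3, s4, hs, k1, k2⟩ := hE.nstar hh hl hl'
  have key : Orb m p v t s1 s3 ∨ Orb m p v t s2 s4 := by
    by_contra hc
    rw [not_or] at hc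
    exact hf _ _ _ _ hs.l0 hs.l1 k1 k2 hs.l3 hs.l4 ⟨hs.e13, hc.1⟩ ⟨hs.e24, hc.2⟩
  have hS := (hA.swap hE).R
  have hs' := hs.rot hE
  have hs'' := hs'.rot hE
  rcases key with ⟨q, hq, ⟨e1, e2⟩ | ⟨e1, e2⟩⟩ | ⟨q, hq, ⟨e1, e2⟩ | ⟨e1, e2⟩⟩ <;>
    refine ⟨-q, (Int.dvd_neg).2 hq, ?_⟩ <;> subst e1 e2
  · have := hs'.uniqR hE (hA.R.sh hP hq); omega
  · have := hs'.uniqR hE (hS.sh hP hq); omega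
  · have := hs''.uniqR hE (hA.R.sh hP hq); omega
  · have := hs''.uniqR hE (hS.sh hP hq); omega

/-- All edges of the two adjacent stars other than the common edge are in `F`. -/
structure Gen (F : ℤ → ℤ → Prop) (v t a b c a1 b1 c1 : ℤ) : Prop where
  g1 : F v b
  g2 : F a b
  g3 : F a c
  g4 : F t c
  g5 : F v b1
  g6 : F a1 t
  g7 : F a1 c1
  g8 : F b1 c1

theorem generic {v t a b c a1 b1 c1 h0 h1 : ℤ} (hE : Tri m E) (hP : Per p E) (hp : p ∣ m)
    (hA : Adj m E v t a b c a1 b1 c1) (hI : a ≤ a1) (hI' : c1 ≤ b)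
    (hg : Gen (Rem m p E v t) v t a b c a1 b1 c1)
    (hh : ¬ E h0 h1) (hl : h0 < h1) (hl' : h1 < h0 + m)
    (hf : Free m (Rem m p E v t) h0 h1) : Orb m p b1 c h0 h1 := by
  obtain ⟨q, hq, hq'⟩ := bisect hE hP hA hh hl hl' hf
  have hf' := hf.sh (Rem.per hP) hq
  have hS := Rem.isSw (v := v) (t := t) hE hp
  have hq2 := (Int.dvd_neg).2 hq
  obtain ⟨⟨r0, r1, r2, r3, r4, -, -, -, -, -⟩, ⟨s0, s1, s2, s3, s4, -, -, -, -, -⟩⟩ := hA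
  obtain ⟨g1, g2, g3, g4, g5, g6, g7, g8⟩ := hg
  rcases hq' with ⟨e1, e2, e3⟩ | ⟨e1, e2, e3⟩ | ⟨e1, e2, e3⟩ | ⟨e1, e2, e3⟩
  · rw [e1] at hf'
    rcases lt_trichotomy (h1 + q) b1 with k | k | k
    · exact (hf' _ _ _ _ (by omega) r0 e2 k (by omega) (by omega) g5 g2).elim
    · exact ⟨-m - q, dvd_sub ((Int.dvd_neg).2 hp) hq, by omega⟩
    · exact (hf' _ _ _ _ (by omega) s1 k e3 s3 (by omega) g6 g8).elim
  · rw [e1] at hf'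
    exact (hf' (c - m) v a b1 (by omega) (by omega) e2 e3 (by omega) (by omega)
      (hS.md g3 (by omega)) g5).elim
  · rw [e1] at hf'
    rcases lt_trichotomy (h1 + q) c with k | k | k
    · exact (hf' t c1 c (a1 + m) (by omega) (by omega) e2 k (by omega) (by omega) g4
        (hS.sw g7)).elim
    · exact ⟨-q, hq2, by omega⟩
    · exact (hf' b c (v + m) (a + m) (by omega) (by omega) k e3 (by omega) (by omega) (hS.sw g1)
        (hS.sw g3)).elim
  · rw [e1] at hf'
    exact (hf' _ _ _ _ (by omega) s2 e2 e3 (by omega) (by omega) g8 g4).elim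

/-- The new edge only forms 3-crossings with the old edge. -/
theorem newfree {v t a b c a1 b1 c1 g1 g2 h1 h2 : ℤ} (hE : Tri m E)
    (hA : Adj m E v t a b c a1 b1 c1) (hI : a ≤ a1) (hI' : c1 ≤ b) (k1 : b1 < g1) (k2 : g1 < h1)
    (k3 : h1 < c) (k4 : c < g2) (k5 : g2 < h2) (k6 : h2 < b1 + m) (hg : E g1 g2) (hh : E h1 h2) :
    g1 = t ∧ g2 = v + m := by
  have hR2 := (hA.R.rot hE).rot hE
  have hSe := hA.S
  obtain ⟨⟨r0, r1, r2, r3, r4, e02, e03, e13, e14, e24⟩, ⟨s0, s1, s2, s3, s4, f02, f03, f13, f14, f24⟩⟩ := hA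
  have q1 : g2 ≤ v + m := by
    by_contra q
    exact hE.x3 (hE.sw f02) hg hh (by omega) (by omega) (by omega) (by omega) (by omega) (by omega)
  have q2 : g1 ≤ t := by
    by_contra q
    exact hE.x3 e24 hg hh (by omega) (by omega) (by omega) (by omega) (by omega) (by omega)
  have q3 : c1 ≤ h1 := by
    by_contra q
    exact hE.x3 f24 hg hh (by omega) (by omega) (by omega) (by omega) (by omega) (by omega)
  have q4 : a + m ≤ h2 := by
    by_contra q
    exact hE.x3 hg hh (hE.sw e14) (by omega) (by omega) (by omega) (by omega) (by omega) (by omega)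
  by_cases c1 : g1 = t
  · subst c1
    refine ⟨rfl, ?_⟩
    by_contra c2
    exact hR2.emp hE k4 (by omega) hg
  by_cases c2 : g2 = v + m
  · exact (hSe.emp hE k1 (by omega) (hE.sb hg c2)).elim
  · exact (hE.x3 hg (hE.sw e02) hh (by omega) (by omega) (by omega) (by omega) (by omega)
      (by omega)).elim

theorem flip_tri {v t x y : ℤ} (hE : Tri m E) (hP : Per p E) (hp : p ∣ m) (hxy : x < y)
    (hxy' : y < x + m) (hF : Free m (Rem m p E v t) x y)
    (hff : ∀ i j a b c d, Orb m p x y i j → Orb m p x y a b → Flip m p E v t x y c d →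
      i < a → a < c → c < j → j < b → b < d → d < i + m → False)
    (hmx : ∀ i j, i < j → j < i + m → ¬ Flip m p E v t x y i j →
      ¬ Free m (Flip m p E v t x y) i j) :
    Tri m (Flip m p E v t x y) where
  lt := by
    rintro i j (h | ⟨q, hq, h⟩)
    · exact hE.lt h.1
    · omega
  lt' := by
    rintro i j (h | ⟨q, hq, h⟩)
    · exact hE.lt' h.1
    · omega
  sw := (Flip.isSw hE hp).sw
  sw' := (Flip.isSw hE hp).sw'
  cf := by
    intro i j h a c b d k1 k2 k3 k4 k5 k6 h1 h2
    have hS := Rem.isSw (v := v) (t := t) hE hp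
    have hFo : ∀ {i j}, Orb m p x y i j → Free m (Rem m p E v t) i j :=
      fun ho => hF.orb hS (Rem.per hP) ho
    rcases h with h | h <;> rcases h1 with h1 | h1 <;> rcases h2 with h2 | h2
    · exact hE.x3 h.1 h1.1 h2.1 k1 k2 k3 k4 k5 k6
    · exact hFo h2 _ _ _ _ k3 k4 k5 k6 (by omega) (by omega) (hS.sw h) (hS.sw h1)
    · exact hFo h1 _ _ _ _ k2 k3 k4 k5 k6 (by omega) h2 (hS.sw h)
    · exact hff _ _ _ _ _ _ h1 h2 (Or.inl (hS.sw h)) k2 k3 k4 k5 k6 (by omega)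
    · exact hFo h _ _ _ _ k1 k2 k3 k4 k5 k6 h1 h2
    · exact hff _ _ _ _ _ _ h2 (h.sw hp) (Or.inl (hS.sw h1)) k3 k4 k5 k6 (by omega) (by omega)
    · exact hff _ _ _ _ _ _ h h1 (Or.inl h2) k1 k2 k3 k4 k5 k6
    · exact hff _ _ _ _ _ _ h h1 (Or.inr h2) k1 k2 k3 k4 k5 k6
  mx := by
    intro i j k1 k2 k3
    by_contra c
    exact hmx i j k1 k2 c k3

theorem mulcases {m q : ℤ} (hm : 0 < m) (h : m ∣ q) :
    q ≤ -(2 * m) ∨ q = -m ∨ q = 0 ∨ q = m ∨ 2 * m ≤ q := by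
  obtain ⟨k, rfl⟩ := h
  by_cases h1 : k ≤ -2
  · left; nlinarith
  by_cases h2 : 2 ≤ k
  · right; right; right; right; nlinarith
  obtain rfl | rfl | rfl : k = -1 ∨ k = 0 ∨ k = 1 := by omega
  all_goals simp

theorem newFreeRem {v t a b c a1 b1 c1 : ℤ} (hE : Tri m E)
    (hA : Adj m E v t a b c a1 b1 c1) (hI : a ≤ a1) (hI' : c1 ≤ b) :
    Free m (Rem m p E v t) b1 c := by
  intro g1 h1 g2 h2 k1 k2 k3 k4 k5 k6 k7 k8
  have := newfree hE hA hI hI' k1 k2 k3 k4 k5 k6 k7.1 k8.1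
  exact k7.2 ⟨0, dvd_zero _, by omega⟩

theorem flip1 {v t a b c a1 b1 c1 : ℤ} (hE : Tri m E)
    (hA : Adj m E v t a b c a1 b1 c1) (hI : a ≤ a1) (hI' : c1 ≤ b) :
    Tri m (Flip m m E v t b1 c) := by
  have hP := Per.of_tri hE
  have hA' := hA
  obtain ⟨⟨r0, r1, r2, r3, r4, e02, e03, e13, e14, e24⟩, ⟨s0, s1, s2, s3, s4, f02, f03, f13, f14, f24⟩⟩ := hA'
  have hm : 0 < m := by omega
  have hg : Gen (Rem m m E v t) v t a b c a1 b1 c1 := by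
    refine ⟨⟨e03, ?_⟩, ⟨e13, ?_⟩, ⟨e14, ?_⟩, ⟨e24, ?_⟩, ⟨f02, ?_⟩, ⟨f13, ?_⟩, ⟨f14, ?_⟩, ⟨f24, ?_⟩⟩ <;>
    · rintro ⟨q, hq, hq'⟩
      have := mulcases hm hq
      omega
  apply flip_tri hE hP dvd_rfl (by omega) (by omega) (newFreeRem hE hA hI hI')
  · rintro i j x y z w ⟨q, hq, hq'⟩ ⟨q2, hq2, hq2'⟩ - l1 l2 l3 l4 l5 l6
    have := mulcases hm (dvd_sub hq hq2)
    omega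
  · intro i j l1 l2 l3 l4
    by_cases hij : E i j
    · have ho : Orb m m v t i j := by
        by_contra ho; exact l3 (Or.inl ⟨hij, ho⟩)
      have hS := Flip.isSw (v := v) (t := t) (x := b1) (y := c) hE (dvd_refl m)
      have := l4.orb hS (Flip.per hP) (ho.symm dvd_rfl)
      exact this a1 b1 c1 c (by omega) (by omega) (by omega) (by omega) (by omega) (by omega)
        (Or.inl hg.g7) (Or.inr (Orb.self _ _ _ _))
    · exact l3 (Or.inr (generic hE hP dvd_rfl hA hI hI' hg hij l1 l2
        (l4.mono fun _ _ => Or.inl)))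

end Multitriangulation

namespace Multitriangulation

variable {m n : ℤ} {E : ℤ → ℤ → Prop}

theorem Tri.eq_of_sub {E F : ℤ → ℤ → Prop} (hE : Tri m E) (hF : Tri m F)
    (h : ∀ i j, E i j → F i j) : F = E := by
  funext i j
  apply propext
  refine ⟨fun k => hE.mx (hF.lt k) (hF.lt' k) ((hF.cf k).mono h), h i j⟩

/-- There is exactly one flip of the orbit of `(v,t)`. -/
def FlipOK (m n : ℤ) (E : ℤ → ℤ → Prop) (v t : ℤ) : Prop :=
  ∃! E' : ℤ → ℤ → Prop, Tri m E' ∧ Per n E' ∧ (∀ i j, Rem m n E v t i j → E' i j) ∧ ¬ E' v t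

theorem FlipOK.mk {v t x y : ℤ} (hE : Tri m E) (hP : Per n E) (hn : n ∣ m) (hvt : E v t)
    (hxy : ¬ E x y) (hT : Tri m (Flip m n E v t x y))
    (hu : ∀ E', Tri m E' → Per n E' → (∀ i j, Rem m n E v t i j → E' i j) → ¬ E' v t →
      ∀ h0 h1, E' h0 h1 → ¬ E h0 h1 → Free m (Rem m n E v t) h0 h1 → Orb m n x y h0 h1) :
    FlipOK m n E v t := by
  refine ⟨Flip m n E v t x y, ⟨hT, Flip.per hP, fun i j h => Or.inl h, ?_⟩, ?_⟩
  · rintro (h | h)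
    · exact h.2 (Orb.self _ _ _ _)
    · exact hxy (Orb.sub hE.isSw hP (h.symm hn) hvt)
  · rintro E' ⟨h1, h2, h3, h4⟩
    apply hT.eq_of_sub h1
    obtain ⟨i, j, k1, k2⟩ : ∃ i j, E' i j ∧ ¬ E i j := by
      by_contra hc
      have : ∀ i j, E' i j → E i j := by
        intro i j k
        by_contra k'
        exact hc ⟨i, j, k, k'⟩
      exact h4 (h1.eq_of_sub hE this ▸ hvt)
    have ho := hu E' h1 h2 h3 h4 i j k1 k2 ((h1.cf k1).mono h3)
    rintro a b (k | k)
    · exact h3 a b k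
    · exact k.sub h1.isSw h2 ((ho.symm hn).sub h1.isSw h2 k1)

theorem Orb.congr {v t v' t' i j : ℤ} (hn : n ∣ m) (h : Orb m n v t v' t') :
    Orb m n v t i j ↔ Orb m n v' t' i j :=
  ⟨fun k => k.sub (Orb.isSw hn) Orb.per (h.symm hn), fun k => k.sub (Orb.isSw hn) Orb.per h⟩

theorem FlipOK.swap {v t : ℤ} (hn : n ∣ m) (h : FlipOK m n E t (v + m)) : FlipOK m n E v t := by
  obtain ⟨E', ⟨h1, h2, h3, h4⟩, h5⟩ := h
  have key : ∀ i j, Orb m n v t i j ↔ Orb m n t (v + m) i j :=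
    fun i j => Orb.congr hn ((Orb.self _ _ _ _).sw hn)
  refine ⟨E', ⟨h1, h2, fun i j k => h3 i j ⟨k.1, fun l => k.2 ((key _ _).2 l)⟩,
    fun k => h4 (h1.sw k)⟩, ?_⟩
  rintro F ⟨k1, k2, k3, k4⟩
  exact h5 F ⟨k1, k2, fun i j k => k3 i j ⟨k.1, fun l => k.2 ((key _ _).1 l)⟩,
    fun k => k4 (k1.sw' k)⟩

theorem Orb.mir {v t i j : ℤ} (hn : n ∣ m) (h : Orb m n v t i j) : Orb m n (-t) (-v) (-j) (-i) := by
  obtain ⟨q, hq, ⟨rfl, rfl⟩ | ⟨rfl, rfl⟩⟩ := h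
  · exact ⟨-q, (Int.dvd_neg).2 hq, by omega⟩
  · exact ⟨-q - m, dvd_sub ((Int.dvd_neg).2 hq) hn, by omega⟩

theorem Per.mir (h : Per n E) : Per n (Mir E) := by
  intro i j q hq k
  exact (cgE (h _ _ (-q) ((Int.dvd_neg).2 hq) k) (by omega) (by omega) : E (-(j + q)) (-(i + q)))

theorem FlipOK.mir {v t : ℤ} (hn : n ∣ m) (h : FlipOK m n (Mir E) (-t) (-v)) :
    FlipOK m n E v t := by
  obtain ⟨E', ⟨h1, h2, h3, h4⟩, h5⟩ := h
  refine ⟨Mir E', ⟨h1.mir, h2.mir, ?_, h4⟩, ?_⟩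
  · intro i j k
    refine h3 _ _ ⟨?_, fun l => k.2 ?_⟩
    · simpa [Mir] using k.1
    · simpa using l.mir hn
  · rintro F ⟨k1, k2, k3, k4⟩
    have := h5 (Mir F) ⟨k1.mir, k2.mir, fun i j k => k3 _ _ ⟨k.1, fun l => k.2 ?_⟩, ?_⟩
    · rw [← this, Mir_Mir]
    · simpa using l.mir hn
    · simpa [Mir] using k4

theorem Adj.mir {v t a b c a1 b1 c1 : ℤ} (hE : Tri m E) (h : Adj m E v t a b c a1 b1 c1) :
    Adj m (Mir E) (-t) (-v) (-a) (m - c) (m - b) (-b1) (-a1) (m - c1) := by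
  obtain ⟨⟨r0, r1, r2, r3, r4, e02, e03, e13, e14, e24⟩, ⟨s0, s1, s2, s3, s4, f02, f03, f13, f14, f24⟩⟩ := h
  refine ⟨⟨?_, ?_, ?_, ?_, ?_, hE.md e02 ?_, hE.md e24 ?_, hE.md e14 ?_, hE.md e13 ?_, hE.md e03 ?_⟩,
    ⟨?_, ?_, ?_, ?_, ?_, hE.md f13 ?_, hE.md f03 ?_, hE.md f02 ?_, hE.md f24 ?_, hE.md f14 ?_⟩⟩ <;> omega

theorem notE {v t a b c a1 b1 c1 : ℤ} (hE : Tri m E)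
    (hA : Adj m E v t a b c a1 b1 c1) (hI' : c1 ≤ b) : ¬ E b1 c := by
  obtain ⟨⟨r0, r1, r2, r3, r4, e02, e03, e13, e14, e24⟩, ⟨s0, s1, s2, s3, s4, f02, f03, f13, f14, f24⟩⟩ := hA
  intro h
  exact hE.x3 e02 f14 h (by omega) (by omega) (by omega) (by omega) (by omega) (by omega)

theorem Adj.diam {v t a b c a1 b1 c1 d : ℤ} (hE : Tri m E) (hP : Per n E)
    (hA : Adj m E v t a b c a1 b1 c1) (hd : n ∣ d) (h1 : v + d = t) (h2 : t + d = v + m) :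
    b1 + d = c ∧ c + d = b1 + m := by
  have h3 := hA.swap hE
  have k1 := hA.R.sh hP hd
  have k2 := hA.S.sh hP hd
  rw [h1, h2] at k1 k2
  have := k1.uniqR hE h3.R
  have := k2.uniqL hE h3.S
  omega

/-- Perform finitely many flips of translates. -/
theorem multi {v t a b c a1 b1 c1 : ℤ} (hE : Tri m E) (hP : Per n E) (hn : n ∣ m)
    (hA : Adj m E v t a b c a1 b1 c1) (hI : a ≤ a1) (hI' : c1 ≤ b)
    (hg : Gen (Rem m n E v t) v t a b c a1 b1 c1) (J : List ℤ) (hJ : ∀ s ∈ J, n ∣ s) :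
    ∃ F : ℤ → ℤ → Prop, Tri m F ∧ (∀ i j, Rem m n E v t i j → F i j) ∧
      (∀ s ∈ J, F (b1 + s) (c + s)) ∧ (∀ s, n ∣ s → F (v + s) (t + s) ∨ F (b1 + s) (c + s)) := by
  induction J with
  | nil => exact ⟨E, hE, fun i j h => h.1, by simp, fun s hs => Or.inl (hP _ _ _ hs hA.R.e02)⟩
  | cons s J ih =>
    obtain ⟨F, h1, h2, h3, h4⟩ := ih (fun s hs => hJ s (List.mem_cons_of_mem _ hs))
    have hs : n ∣ s := hJ s (by simp)
    by_cases hF : F (b1 + s) (c + s)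
    · exact ⟨F, h1, h2, by simpa using ⟨hF, h3⟩, h4⟩
    have hvt := (h4 s hs).resolve_right hF
    have hRP := Rem.per (m := m) (v := v) (t := t) hP
    have hAF : Adj m F (v + s) (t + s) (a + s) (b + s) (c + s) (a1 + s) (b1 + s) (c1 + s) := by
      obtain ⟨g1, g2, g3, g4, g5, g6, g7, g8⟩ := hg
      obtain ⟨⟨r0, r1, r2, r3, r4, -, -, -, -, -⟩, ⟨s0, s1, s2, s3, s4, -, -, -, -, -⟩⟩ := hA
      have key : ∀ {i j}, Rem m n E v t i j → F (i + s) (j + s) :=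
        fun k => h2 _ _ (hRP _ _ _ hs k)
      exact ⟨⟨by omega, by omega, by omega, by omega, by omega, hvt, key g1, key g2, key g3, key g4⟩,
        ⟨by omega, by omega, by omega, by omega, by omega, key g5, hvt, key g6, key g7, key g8⟩⟩
    have hT := flip1 h1 hAF (by omega) (by omega)
    have hOO : ∀ {i j}, Orb m m (v + s) (t + s) i j → Orb m n v t i j := by
      rintro i j ⟨q, hq, hq'⟩
      exact ⟨s + q, dvd_add hs (hn.trans hq), by omega⟩
    have hf : ∀ s', n ∣ s' → F (b1 + s') (c + s') →
        Flip m m F (v + s) (t + s) (b1 + s) (c + s) (b1 + s') (c + s') := by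
      intro s' hs' k
      refine Or.inl ⟨k, fun l => ?_⟩
      have := Orb.sub hE.isSw hP (hOO l) hA.R.e02
      exact notE hE hA hI' (cgE (hP _ _ (-s') ((Int.dvd_neg).2 hs') this) (by omega) (by omega))
    refine ⟨_, hT, fun i j k => Or.inl ⟨h2 _ _ k, fun l => k.2 (hOO l)⟩, ?_, ?_⟩
    · intro s' hs'
      rcases List.mem_cons.1 hs' with rfl | hs'
      · exact Or.inr (Orb.self _ _ _ _)
      · exact hf s' (hJ s' (by simp [hs'])) (h3 s' hs')
    · intro s' hs'
      rcases h4 s' hs' with k | k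
      · by_cases ho : Orb m m (v + s) (t + s) (v + s') (t + s')
        · right; right
          obtain ⟨q, hq, ⟨e1, e2⟩ | ⟨e1, e2⟩⟩ := ho
          · exact ⟨q, hq, by omega⟩
          · have := hA.diam hE hP (d := s' - s - q) (dvd_sub (dvd_sub hs' hs) (hn.trans hq))
              (by omega) (by omega)
            exact ⟨q, hq, by omega⟩
        · left; left; exact ⟨k, ho⟩
      · exact Or.inr (hf s' hs' k)

theorem flip_gen {v t a b c a1 b1 c1 : ℤ} (hE : Tri m E) (hP : Per n E) (hn : n ∣ m)
    (hA : Adj m E v t a b c a1 b1 c1) (hI : a ≤ a1) (hI' : c1 ≤ b)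
    (hg : Gen (Rem m n E v t) v t a b c a1 b1 c1) : FlipOK m n E v t := by
  have hA' := hA
  obtain ⟨⟨r0, r1, r2, r3, r4, e02, e03, e13, e14, e24⟩, ⟨s0, s1, s2, s3, s4, f02, f03, f13, f14, f24⟩⟩ := hA'
  apply FlipOK.mk (x := b1) (y := c) hE hP hn e02 (notE hE hA hI')
  · apply flip_tri hE hP hn (by omega) (by omega) (newFreeRem hE hA hI hI')
    · rintro i j x y z w ⟨q, hq, hq'⟩ ⟨q2, hq2, hq2'⟩ h3 l1 l2 l3 l4 l5 l6
      obtain ⟨q3, hq3, hq3'⟩ : ∃ q3, n ∣ q3 ∧ (Rem m n E v t z w ∨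
          ((z = b1 + q3 ∧ w = c + q3) ∨ (z = c + q3 ∧ w = b1 + m + q3))) := by
        rcases h3 with h3 | ⟨q3, hq3, h3⟩
        · exact ⟨0, dvd_zero _, Or.inl h3⟩
        · exact ⟨q3, hq3, Or.inr h3⟩
      obtain ⟨F, h1, h2, k3, -⟩ := multi hE hP hn hA hI hI' hg [q, q2, q3] (by
        simp [hq, hq2, hq3])
      have key : ∀ s ∈ [q, q2, q3], ∀ i j, ((i = b1 + s ∧ j = c + s) ∨
          (i = c + s ∧ j = b1 + m + s)) → F i j := by
        intro s hs i j hij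
        exact h1.md (k3 s hs) (by omega)
      refine h1.x3 (key q (by simp) _ _ hq') (key q2 (by simp) _ _ hq2') (c := z) (f := w) ?_
        l1 l2 l3 l4 l5 l6
      rcases hq3' with h3 | h3
      · exact h2 _ _ h3
      · exact key q3 (by simp) _ _ h3
    · intro i j l1 l2 l3 l4
      by_cases hij : E i j
      · have ho : Orb m n v t i j := by
          by_contra ho; exact l3 (Or.inl ⟨hij, ho⟩)
        have hS := Flip.isSw (v := v) (t := t) (x := b1) (y := c) hE hn
        have := l4.orb hS (Flip.per hP) (ho.symm hn)
        exact this a1 b1 c1 c (by omega) (by omega) (by omega) (by omega) (by omega) (by omega)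
          (Or.inl hg.g7) (Or.inr (Orb.self _ _ _ _))
      · exact l3 (Or.inr (generic hE hP hn hA hI hI' hg hij l1 l2
          (l4.mono fun _ _ => Or.inl)))
  · intro E' k1 k2 k3 k4 h0 h1 k5 k6 k7
    exact generic hE hP hn hA hI hI' hg k6 (k1.lt k5) (k1.lt' k5) k7

end Multitriangulation

namespace Multitriangulation

variable {n : ℤ} {E : ℤ → ℤ → Prop}

theorem enum {n q : ℤ} (h : n ∣ q) (hlo : -(6 * n) < q) (hhi : q < 6 * n) :
    q = -(5 * n) ∨ q = -(4 * n) ∨ q = -(3 * n) ∨ q = -(2 * n) ∨ q = -n ∨ q = 0 ∨ q = n ∨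
      q = 2 * n ∨ q = 3 * n ∨ q = 4 * n ∨ q = 5 * n := by
  obtain ⟨k, rfl⟩ := h
  have hn : 0 < n := by omega
  have h1 : -6 < k := by nlinarith
  have h2 : k < 6 := by nlinarith
  interval_cases k <;> omega

theorem one {n q : ℤ} (h : n ∣ q) (hlo : 0 < q) (hhi : q < 2 * n) : q = n := by
  obtain ⟨k, rfl⟩ := h
  have hn : 0 < n := by omega
  have h1 : 0 < k := by nlinarith
  have h2 : k < 2 := by nlinarith
  obtain rfl : k = 1 := by omega
  omega

theorem no5 {n q k : ℤ} (hn : 0 < n) (h : n ∣ q) (h5 : 5 * q = k * n) (hk : k % 5 ≠ 0) :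
    False := by
  obtain ⟨r, rfl⟩ := h
  have : n * (5 * r) = n * k := by linarith
  have := mul_left_cancel₀ hn.ne' this
  omega

/-- An edge of the right adjacent star is in the orbit of the common edge. -/
theorem nongen {v t a b c a1 b1 c1 : ℤ} (hE : Tri (4 * n) E) (hP : Per n E)
    (hA : Adj (4 * n) E v t a b c a1 b1 c1) (hI : a ≤ a1) (hI' : c1 ≤ b)
    (ho : Orb (4 * n) n v t v b ∨ Orb (4 * n) n v t a b ∨ Orb (4 * n) n v t a c ∨
      Orb (4 * n) n v t t c) :
    (a = t - n ∧ b = v + 3 * n ∧ c1 = t + n ∧ a1 = c - 3 * n ∧ b1 = v + n) ∨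
    (a = v + n ∧ c = t + n ∧ a1 = t - n ∧ b1 = b - n ∧ c1 = v + 3 * n) := by
  have hn : n ∣ 4 * n := Dvd.intro_left 4 rfl
  have hR := hA.R
  have hR1 := hR.rot hE
  have hR2 := hR1.rot hE
  have hR3 := hR2.rot hE
  have hR4 := hR3.rot hE
  have hS := (hA.swap hE).R
  obtain ⟨⟨r0, r1, r2, r3, r4, -, -, -, -, -⟩, ⟨s0, s1, s2, s3, s4, -, -, -, -, -⟩⟩ := hA
  have hn0 : 0 < n := by omega
  rcases ho with ho | ho | ho | ho
  · obtain ⟨q, hq, ⟨e1, e2⟩ | ⟨e1, e2⟩⟩ := ho.sw hn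
    · rw [e1, e2] at hR3
      have := hR3.uniqR hE (hR.sh hP hq)
      exact (no5 (k := 12) hn0 hq (by omega) (by omega)).elim
    · omega
  · obtain ⟨q, hq, ⟨e1, e2⟩ | ⟨e1, e2⟩⟩ := ho
    · have k := hR.sh hP hq
      rw [← e1, ← e2] at k
      have := hR1.uniqR hE k
      exact (no5 (k := 4) hn0 hq (by omega) (by omega)).elim
    · have k := hS.sh hP hq
      rw [← e1, ← e2] at k
      have := hR1.uniqR hE k
      have := one (q := -q) ((Int.dvd_neg).2 hq) (by omega) (by omega)
      left; omega
  · obtain ⟨q, hq, ⟨e1, e2⟩ | ⟨e1, e2⟩⟩ := ho.sw hn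
    · have k := hR.sh hP hq
      rw [← e1, ← e2] at k
      have := hR4.uniqR hE k
      exact (no5 (k := 16) hn0 hq (by omega) (by omega)).elim
    · have k := hS.sh hP hq
      rw [← e1, ← e2] at k
      have := hR4.uniqR hE k
      have := one hq (by omega) (by omega)
      right; omega
  · obtain ⟨q, hq, ⟨e1, e2⟩ | ⟨e1, e2⟩⟩ := ho
    · have k := hR.sh hP hq
      rw [← e1, ← e2] at k
      have := hR2.uniqR hE k
      exact (no5 (k := 8) hn0 hq (by omega) (by omega)).elim
    · omega

/-- New edges in the degenerate configuration. -/
theorem alpha_new {v t c h0 h1 : ℤ} (hE : Tri (4 * n) E) (hP : Per n E)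
    (hA : Adj (4 * n) E v t (t - n) (v + 3 * n) c (c - 3 * n) (v + n) (t + n))
    (hI : t - n ≤ c - 3 * n)
    (hh : ¬ E h0 h1) (hl : h0 < h1) (hl' : h1 < h0 + 4 * n)
    (hf : Free (4 * n) (Rem (4 * n) n E v t) h0 h1) :
    Orb (4 * n) n (v + n) c h0 h1 ∨ Orb (4 * n) n v (v + 2 * n) h0 h1 := by
  have hn : n ∣ 4 * n := Dvd.intro_left 4 rfl
  obtain ⟨q, hq, hb⟩ := bisect hE hP hA hh hl hl' hf
  obtain ⟨q', hq', hb'⟩ := bisect hE hP hA (fun k => hh (hE.sw' k)) (by omega) (by omega)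
    (hf.sw (Rem.isSw hE hn))
  have hn2 : n ∣ -q - n := dvd_sub ((Int.dvd_neg).2 hq) dvd_rfl
  obtain ⟨⟨r0, r1, r2, r3, r4, -, -, -, -, -⟩, ⟨s0, s1, s2, s3, s4, -, -, -, -, -⟩⟩ := hA
  have hr := dvd_sub hq' hq
  have hqn := (Int.dvd_neg).2 hq
  have key : (h0 + q = c - 4 * n ∧ h1 + q = v + n) ∨ (h0 + q = v + n ∧ h1 + q = c) ∨
      (h0 + q = c - 3 * n ∧ h1 + q = v + 2 * n) ∨ (h0 + q = v + n ∧ h1 + q = v + 3 * n) := by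
    obtain ⟨r, rfl⟩ : ∃ r, q' = q + r := ⟨q' - q, by omega⟩
    obtain ⟨x, hx⟩ : ∃ x, x = h0 + q := ⟨_, rfl⟩
    obtain ⟨y, hy⟩ : ∃ y, y = h1 + q := ⟨_, rfl⟩
    obtain ⟨δ, hδ⟩ : ∃ δ, δ = c - t := ⟨_, rfl⟩
    obtain ⟨ε, hε⟩ : ∃ ε, ε = t - v := ⟨_, rfl⟩
    have hr' : n ∣ r := by simpa using hr
    rw [← hx, ← hy] at hb ⊢
    rw [show h0 + 4 * n + (q + r) = x + 4 * n + r by omega, show h1 + (q + r) = y + r by omega] at hb'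
    clear hr hx hy hqn hq hh hl hl' hf hq' hn2 hE hP
    rcases hb with hb | hb | hb | hb <;> rcases hb' with hb' | hb' | hb' | hb' <;>
    · have hen := enum hr' (by omega) (by omega)
      clear hr'
      rcases hen with rfl | rfl | rfl | rfl | rfl | rfl | rfl | rfl | rfl | rfl | rfl <;>
      first
      | (exfalso; omega)
      | omega
  rcases key with k | k | k | k
  · left; exact ⟨-q - 4 * n, dvd_sub hqn hn, by omega⟩
  · left; exact ⟨-q, hqn, by omega⟩
  · left; exact ⟨-q - 3 * n, dvd_sub hqn (Dvd.intro_left 3 rfl), by omega⟩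
  · right; exact ⟨-q + n, dvd_add hqn dvd_rfl, by omega⟩

end Multitriangulation

namespace Multitriangulation

variable {n : ℤ} {E : ℤ → ℤ → Prop}

theorem alphaA {v t c g1 g2 : ℤ} (hE : Tri (4 * n) E) (hP : Per n E)
    (hA : Adj (4 * n) E v t (t - n) (v + 3 * n) c (c - 3 * n) (v + n) (t + n))
    (hI : t + 2 * n ≤ c)
    (hg : Flip (4 * n) n E v t (v + n) c g1 g2) (k1 : c - 4 * n < g1) (k2 : g1 < c - 3 * n)
    (k3 : v + n < g2) (k4 : g2 < v + 2 * n) : False := by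
  have hR2 := (hA.R.rot hE).rot hE
  have hS3 := ((hA.S.rot hE).rot hE).rot hE
  have hS := hA.S
  obtain ⟨⟨r0, r1, r2, r3, r4, e02, e03, e13, e14, e24⟩, ⟨s0, s1, s2, s3, s4, f02, f03, f13, f14, f24⟩⟩ := hA
  rcases hg with ⟨hg, hgo⟩ | ⟨q, hq, hg⟩
  · rcases lt_trichotomy g2 t with l | l | l
    · rcases lt_trichotomy g1 v with l' | l' | l'
      · exact hE.x3 hg e02 f14 (by omega) (by omega) (by omega) (by omega) (by omega) (by omega)
      · exact hS.emp hE (t := g2) (by omega) (by omega) (l' ▸ hg)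
      · exact hE.x3 hg f13 f24 (by omega) (by omega) (by omega) (by omega) (by omega) (by omega)
    · subst l
      rcases lt_trichotomy g1 v with l' | l' | l'
      · exact hR2.emp hE (by omega) (by omega) (hE.sw hg)
      · subst l'; exact hgo (Orb.self _ _ _ _)
      · exact hS3.emp hE (by omega) (by omega) (hE.sw hg)
    · exact hE.x3 (a := c - 4 * n) (d := t) (hE.md e24 (by omega)) hg f14 (by omega) (by omega) (by omega)
        (by omega) (by omega) (by omega)
  · have := enum hq (by omega) (by omega)
    rcases this with rfl | rfl | rfl | rfl | rfl | rfl | rfl | rfl | rfl | rfl | rfl <;> omega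

theorem alphaB {v t c g1 g2 : ℤ} (hE : Tri (4 * n) E) (hP : Per n E)
    (hA : Adj (4 * n) E v t (t - n) (v + 3 * n) c (c - 3 * n) (v + n) (t + n))
    (hI : t + 2 * n ≤ c)
    (hg : Flip (4 * n) n E v t (v + n) c g1 g2) (k1 : c - 3 * n < g1) (k2 : g1 < v + n)
    (k3 : v + 2 * n < g2) (k4 : g2 < c) : False := by
  have hR2 := ((hA.R.rot hE).rot hE).sh hP (dvd_refl n)
  obtain ⟨⟨r0, r1, r2, r3, r4, e02, e03, e13, e14, e24⟩, ⟨s0, s1, s2, s3, s4, f02, f03, f13, f14, f24⟩⟩ := hA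
  rcases hg with ⟨hg, hgo⟩ | ⟨q, hq, hg⟩
  · rcases lt_trichotomy g2 (t + n) with l | l | l
    · exact hE.x3 hg f24 (hP _ _ n dvd_rfl f24) (by omega) (by omega) (by omega) (by omega) (by omega)
        (by omega)
    · exact hR2.emp hE (t := g1 + 4 * n) (by omega) (by omega) (l ▸ hE.sw hg)
    · exact hE.x3 e02 f14 hg (by omega) (by omega) (by omega) (by omega) (by omega) (by omega)
  · have := enum hq (by omega) (by omega)
    rcases this with rfl | rfl | rfl | rfl | rfl | rfl | rfl | rfl | rfl | rfl | rfl <;> omega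

theorem alpha_ff {v t c i j x y z w : ℤ} (hE : Tri (4 * n) E) (hP : Per n E)
    (hA : Adj (4 * n) E v t (t - n) (v + 3 * n) c (c - 3 * n) (v + n) (t + n))
    (hI : t + 2 * n ≤ c) (h1 : Orb (4 * n) n (v + n) c i j) (h2 : Orb (4 * n) n (v + n) c x y)
    (h3 : Flip (4 * n) n E v t (v + n) c z w) (l1 : i < x) (l2 : x < z) (l3 : z < j) (l4 : j < y)
    (l5 : y < w) (l6 : w < i + 4 * n) : False := by
  have hn : n ∣ 4 * n := Dvd.intro_left 4 rfl
  obtain ⟨q, hq, hij⟩ := h1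
  obtain ⟨q2, hq2, hxy⟩ := h2
  have hSw := Flip.isSw (v := v) (t := t) (x := v + n) (y := c) hE hn
  have hPer : Per n (Flip (4 * n) n E v t (v + n) c) := Flip.per hP
  have hb : n < t - v ∧ t - v < 2 * n ∧ c < v + 4 * n := by
    obtain ⟨⟨r0, r1, r2, r3, r4, -, -, -, -, -⟩, ⟨s0, s1, s2, s3, s4, -, -, -, -, -⟩⟩ := hA
    omega
  have hq' := (Int.dvd_neg).2 hq
  have hq2' := (Int.dvd_neg).2 hq2
  have hen := enum (dvd_sub hq2 hq) (by omega) (by omega)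
  obtain ⟨r, rfl⟩ : ∃ r, q2 = q + r := ⟨q2 - q, by omega⟩
  rw [show q + r - q = r by omega] at hen
  rcases hij with ⟨e1, e2⟩ | ⟨e1, e2⟩ <;> rcases hxy with ⟨e3, e4⟩ | ⟨e3, e4⟩
  · have hr : r = n := by
      rcases hen with rfl | rfl | rfl | rfl | rfl | rfl | rfl | rfl | rfl | rfl | rfl <;> omega
    subst hr
    -- long, long
    have h4 := hPer _ _ (-q - 4 * r) (dvd_sub hq' hn) (hSw.md h3 (i' := w) (j' := z + 4 * r) (by omega))
    exact alphaB hE hP hA hI h4 (by omega) (by omega) (by omega) (by omega)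
  · have hr : r = -n := by
      rcases hen with rfl | rfl | rfl | rfl | rfl | rfl | rfl | rfl | rfl | rfl | rfl <;> omega
    subst hr
    have h4 := hPer _ _ (-q - 3 * n) (dvd_sub hq' (Dvd.intro_left 3 rfl)) h3
    exact alphaA hE hP hA hI h4 (by omega) (by omega) (by omega) (by omega)
  · have hr : r = 3 * n := by
      rcases hen with rfl | rfl | rfl | rfl | rfl | rfl | rfl | rfl | rfl | rfl | rfl <;> omega
    subst hr
    have h4 := hPer _ _ (-q - 3 * n) (dvd_sub hq' (Dvd.intro_left 3 rfl)) (hSw.md h3 (i' := w - 4 * n) (j' := z) (by omega))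
    exact alphaA hE hP hA hI h4 (by omega) (by omega) (by omega) (by omega)
  · have hr : r = n := by
      rcases hen with rfl | rfl | rfl | rfl | rfl | rfl | rfl | rfl | rfl | rfl | rfl <;> omega
    subst hr
    have h4 := hPer _ _ (-q - 4 * r) (dvd_sub hq' hn) h3
    exact alphaB hE hP hA hI h4 (by omega) (by omega) (by omega) (by omega)

theorem flip_alpha {v t c : ℤ} (hE : Tri (4 * n) E) (hP : Per n E)
    (hA : Adj (4 * n) E v t (t - n) (v + 3 * n) c (c - 3 * n) (v + n) (t + n))
    (hI : t + 2 * n ≤ c) : FlipOK (4 * n) n E v t := by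
  have hn : n ∣ 4 * n := Dvd.intro_left 4 rfl
  have hA' := hA
  obtain ⟨⟨r0, r1, r2, r3, r4, e02, e03, e13, e14, e24⟩, ⟨s0, s1, s2, s3, s4, f02, f03, f13, f14, f24⟩⟩ := hA'
  have hr1 : Rem (4 * n) n E v t t c := by
    refine ⟨e24, ?_⟩
    rintro ⟨q, hq, ⟨k1, k2⟩ | ⟨k1, k2⟩⟩ <;> omega
  have hr2 : Rem (4 * n) n E v t (c - 3 * n) (t + n) := by
    have h := Rem.per (m := 4 * n) (v := v) (t := t) hP _ _ (-(3 * n))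
      ((Int.dvd_neg).2 (Dvd.intro_left 3 rfl)) ((Rem.isSw hE hn).sw hr1)
    exact cgE h (by omega) (by omega)
  have hS := Flip.isSw (v := v) (t := t) (x := v + n) (y := c) hE hn
  have hPer : Per n (Flip (4 * n) n E v t (v + n) c) := Flip.per hP
  apply FlipOK.mk (x := v + n) (y := c) hE hP hn e02 (notE hE hA (by omega))
  · apply flip_tri hE hP hn (by omega) (by omega) (newFreeRem hE hA (by omega) (by omega))
    · intro i j x y z w h1 h2 h3 l1 l2 l3 l4 l5 l6
      exact alpha_ff hE hP hA hI h1 h2 h3 l1 l2 l3 l4 l5 l6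
    · intro i j l1 l2 l3 l4
      by_cases hij : E i j
      · have ho : Orb (4 * n) n v t i j := by
          by_contra ho; exact l3 (Or.inl ⟨hij, ho⟩)
        have := l4.orb hS hPer (ho.symm hn)
        exact this (c - 3 * n) (v + n) (t + n) c (by omega) (by omega) (by omega) (by omega) (by omega)
          (by omega) (Or.inl hr2) (Or.inr (Orb.self _ _ _ _))
      · rcases alpha_new hE hP hA (by omega) hij l1 l2 (l4.mono fun _ _ => Or.inl) with ho | ho
        · exact l3 (Or.inr ho)
        · have := l4.orb hS hPer (ho.symm hn)
          exact this (c - 3 * n) (c - 2 * n) (t + n) (v + 3 * n) (by omega) (by omega) (by omega)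
            (by omega) (by omega) (by omega) (Or.inl hr2)
            (Or.inr ⟨-(2 * n), (Int.dvd_neg).2 (Dvd.intro_left 2 rfl), by omega⟩)
  · intro E' k1 k2 k3 k4 h0 h1 k5 k6 k7
    rcases alpha_new hE hP hA (by omega) k6 (k1.lt k5) (k1.lt' k5) k7 with ho | ho
    · exact ho
    · exfalso
      have hd := (ho.symm hn).sub k1.isSw k2 k5
      exact k1.x3 hd (k2 _ _ n dvd_rfl hd) (k3 _ _ hr1) (by omega) (by omega) (by omega) (by omega)
        (by omega) (by omega)

theorem flip_I {v t a b c a1 b1 c1 : ℤ} (hE : Tri (4 * n) E) (hP : Per n E)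
    (hA : Adj (4 * n) E v t a b c a1 b1 c1) (hI : a ≤ a1) (hI' : c1 ≤ b) :
    FlipOK (4 * n) n E v t := by
  have hn : n ∣ 4 * n := Dvd.intro_left 4 rfl
  have hA' := hA.swap hE
  have fin : (a = t - n ∧ b = v + 3 * n ∧ c1 = t + n ∧ a1 = c - 3 * n ∧ b1 = v + n) ∨
    (a = v + n ∧ c = t + n ∧ a1 = t - n ∧ b1 = b - n ∧ c1 = v + 3 * n) → FlipOK (4 * n) n E v t := by
    rintro (⟨rfl, rfl, rfl, rfl, rfl⟩ | ⟨rfl, rfl, rfl, rfl, rfl⟩)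
    · exact flip_alpha hE hP hA (by omega)
    · apply FlipOK.swap hn
      apply flip_alpha (c := b - n + 4 * n) hE hP _ (by omega)
      convert hA' using 1 <;> omega
  by_cases hg : Gen (Rem (4 * n) n E v t) v t a b c a1 b1 c1
  · exact flip_gen hE hP hn hA hI hI' hg
  apply fin
  by_contra hc
  apply hg
  obtain ⟨⟨r0, r1, r2, r3, r4, e02, e03, e13, e14, e24⟩, ⟨s0, s1, s2, s3, s4, f02, f03, f13, f14, f24⟩⟩ := hA
  have hR := fun h => hc (nongen hE hP ⟨⟨r0, r1, r2, r3, r4, e02, e03, e13, e14, e24⟩, ⟨s0, s1, s2, s3, s4, f02, f03, f13, f14, f24⟩⟩ hI hI' h)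
  have hS := fun h => hc (by
    have := nongen hE hP hA' hI' (by omega) h
    omega)
  have oc : ∀ {i j}, Orb (4 * n) n v t i j → Orb (4 * n) n t (v + 4 * n) i j := fun k =>
    (Orb.congr hn ((Orb.self _ _ _ _).sw hn)).1 k
  refine ⟨⟨e03, fun k => hR ?_⟩, ⟨e13, fun k => hR ?_⟩, ⟨e14, fun k => hR ?_⟩, ⟨e24, fun k => hR ?_⟩,
    ⟨f02, fun k => hS ?_⟩, ⟨f13, fun k => hS ?_⟩, ⟨f14, fun k => hS ?_⟩, ⟨f24, fun k => hS ?_⟩⟩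
  · exact Or.inl k
  · exact Or.inr (Or.inl k)
  · exact Or.inr (Or.inr (Or.inl k))
  · exact Or.inr (Or.inr (Or.inr k))
  · exact Or.inr (Or.inr (Or.inr ((oc k).sh hn)))
  · exact Or.inl ((oc k).sw hn)
  · exact Or.inr (Or.inl ((oc k).sw hn))
  · exact Or.inr (Or.inr (Or.inl ((oc k).sw hn)))

theorem flipOK {v t : ℤ} (hE : Tri (4 * n) E) (hP : Per n E) (ht : E v t) (h1 : v + 2 < t)
    (h2 : t < v + 4 * n - 2) : FlipOK (4 * n) n E v t := by
  have hn : n ∣ 4 * n := Dvd.intro_left 4 rfl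
  obtain ⟨a, b, c, a1, b1, c1, hA⟩ := hE.adj ht h1 h2
  rcases hA.cases hE with ⟨k1, k2⟩ | ⟨k1, k2⟩
  · exact flip_I hE hP hA k1 k2
  · exact FlipOK.mir hn (flip_I hE.mir hP.mir (hA.mir hE) (by omega) (by omega))

end Multitriangulation

namespace Multitriangulation

open Classical in
/-- The representatives of the edges whose length satisfies `P`. -/
noncomputable def Reps (n : ℤ) (E : ℤ → ℤ → Prop) (P : ℤ → Prop) : Finset (ℤ × ℤ) :=
  (Finset.Ico 0 n ×ˢ Finset.Icc 0 (5 * n)).filter (fun x => E x.1 x.2 ∧ P (x.2 - x.1))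

open Classical in
/-- The representatives of the stars. -/
noncomputable def Stars (n : ℤ) (E : ℤ → ℤ → Prop) : Finset (ℤ × ℤ × ℤ × ℤ × ℤ) :=
  (Finset.Ico 0 n ×ˢ Finset.Icc 0 (5 * n) ×ˢ Finset.Icc 0 (5 * n) ×ˢ Finset.Icc 0 (5 * n) ×ˢ
    Finset.Icc 0 (5 * n)).filter
    (fun x => Star (4 * n) E x.1 x.2.1 x.2.2.1 x.2.2.2.1 x.2.2.2.2)

variable {n : ℤ} {E : ℤ → ℤ → Prop}

theorem mem_Reps (hE : Tri (4 * n) E) {P : ℤ → Prop} {x : ℤ × ℤ} :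
    x ∈ Reps n E P ↔ 0 ≤ x.1 ∧ x.1 < n ∧ E x.1 x.2 ∧ P (x.2 - x.1) := by
  simp only [Reps, Finset.mem_filter, Finset.mem_product, Finset.mem_Ico, Finset.mem_Icc]
  constructor
  · tauto
  · rintro ⟨h1, h2, h3, h4⟩
    have := hE.lt h3
    have := hE.lt' h3
    exact ⟨⟨⟨h1, h2⟩, by omega, by omega⟩, h3, h4⟩

theorem mem_Stars {x : ℤ × ℤ × ℤ × ℤ × ℤ} :
    x ∈ Stars n E ↔ 0 ≤ x.1 ∧ x.1 < n ∧ Star (4 * n) E x.1 x.2.1 x.2.2.1 x.2.2.2.1 x.2.2.2.2 := by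
  simp only [Stars, Finset.mem_filter, Finset.mem_product, Finset.mem_Ico, Finset.mem_Icc]
  constructor
  · tauto
  · rintro ⟨h1, h2, h3⟩
    have := h3.l0
    have := h3.l1
    have := h3.l2
    have := h3.l3
    have := h3.l4
    exact ⟨⟨⟨h1, h2⟩, by omega, by omega, by omega, by omega⟩, h3⟩

/-- Rotation of star representatives. -/
def rho (n : ℤ) (x : ℤ × ℤ × ℤ × ℤ × ℤ) : ℤ × ℤ × ℤ × ℤ × ℤ :=
  (x.2.1 - n * (x.2.1 / n), x.2.2.1 - n * (x.2.1 / n), x.2.2.2.1 - n * (x.2.1 / n),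
    x.2.2.2.2 - n * (x.2.1 / n), x.1 + 4 * n - n * (x.2.1 / n))

theorem red (hn : 0 < n) (x : ℤ) : 0 ≤ x - n * (x / n) ∧ x - n * (x / n) < n := by
  rw [← Int.emod_def]
  exact ⟨Int.emod_nonneg _ hn.ne', Int.emod_lt_of_pos _ hn⟩

theorem dvd_small (hn : 0 < n) {q : ℤ} (h : n ∣ q) (h1 : -n < q) (h2 : q < n) : q = 0 := by
  have := mulcases hn h
  omega

theorem rho_sum (hn : 0 < n) (hE : Tri (4 * n) E) (hP : Per n E) (g : ℤ × ℤ × ℤ × ℤ × ℤ → ℤ) :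
    ∑ x ∈ Stars n E, g (rho n x) = ∑ x ∈ Stars n E, g x := by
  have hinj : Set.InjOn (rho n) (Stars n E) := by
    rintro ⟨x0, x1, x2, x3, x4⟩ hx ⟨y0, y1, y2, y3, y4⟩ hy h
    have hx' := mem_Stars.1 (Finset.mem_coe.1 hx)
    have hy' := mem_Stars.1 (Finset.mem_coe.1 hy)
    simp only [rho, Prod.mk.injEq] at h hx' hy'
    have hd : n ∣ x0 - y0 := by
      have : x0 - y0 = n * (x1 / n) - n * (y1 / n) := by omega
      rw [this]
      exact dvd_sub (dvd_mul_right _ _) (dvd_mul_right _ _)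
    have := dvd_small hn hd (by omega) (by omega)
    simp only [Prod.mk.injEq]
    omega
  have himg : (Stars n E).image (rho n) = Stars n E := by
    apply Finset.eq_of_subset_of_card_le
    · intro y hy
      obtain ⟨x, hx, rfl⟩ := Finset.mem_image.1 hy
      obtain ⟨h1, h2, h3⟩ := mem_Stars.1 hx
      have := red hn x.2.1
      refine mem_Stars.2 ⟨this.1, this.2, ?_⟩
      have := (h3.rot hE).sh hP (q := -(n * (x.2.1 / n))) ((Int.dvd_neg).2 (dvd_mul_right _ _))
      exact this
    · rw [Finset.card_image_of_injOn hinj]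
  conv_rhs => rw [← himg]
  rw [Finset.sum_image hinj]

theorem five (hn : 0 < n) (hE : Tri (4 * n) E) (hP : Per n E) :
    5 * ∑ x ∈ Stars n E, (x.2.2.2.1 - x.2.2.1) = 4 * n * (Stars n E).card := by
  have h0 := rho_sum hn hE hP (fun x => x.2.1 - x.1)
  have h1 := rho_sum hn hE hP (fun x => x.2.2.1 - x.2.1)
  have h2 := rho_sum hn hE hP (fun x => x.2.2.2.1 - x.2.2.1)
  have h3 := rho_sum hn hE hP (fun x => x.2.2.2.2 - x.2.2.2.1)
  simp only [rho, sub_sub_sub_cancel_right] at h0 h1 h2 h3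
  have h4 : ∑ x ∈ Stars n E, ((x.2.1 - x.1) + (x.2.2.1 - x.2.1) + (x.2.2.2.1 - x.2.2.1) +
      (x.2.2.2.2 - x.2.2.2.1) + (x.1 + 4 * n - x.2.2.2.2)) = ∑ x ∈ Stars n E, 4 * n :=
    Finset.sum_congr rfl (fun x _ => by ring)
  simp only [Finset.sum_add_distrib] at h4
  have h5 : ∑ x ∈ Stars n E, 4 * n = 4 * n * (Stars n E).card := by
    rw [Finset.sum_const, nsmul_eq_mul, mul_comm]
  have h6 : ∑ x ∈ Stars n E, (x.1 + 4 * n - x.2.2.2.2) = ∑ x ∈ Stars n E, (x.2.2.2.2 - x.2.2.2.1) := h3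
  linarith

theorem sumgap (hn : 0 < n) (hE : Tri (4 * n) E) :
    ∑ x ∈ Stars n E, (x.2.2.2.1 - x.2.2.1) = n * (4 * n - 4) := by
  have h1 : ((Stars n E).sigma (fun x => Finset.Ioc x.2.2.1 x.2.2.2.1)).card =
      ((Finset.Ico 0 n).sigma (fun v => Finset.Ioc (v + 2) (v + 4 * n - 2))).card := by
    refine Finset.card_bij (fun x _ => ⟨x.1.1, x.2⟩) ?_ ?_ ?_
    · rintro ⟨⟨x0, x1, x2, x3, x4⟩, t⟩ h
      simp only [Finset.mem_sigma, mem_Stars, Finset.mem_Ioc, Finset.mem_Ico] at h ⊢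
      obtain ⟨⟨k1, k2, k3⟩, k4, k5⟩ := h
      have := k3.l0
      have := k3.l1
      have := k3.l3
      have := k3.l4
      omega
    · rintro ⟨⟨x0, x1, x2, x3, x4⟩, t⟩ h ⟨⟨y0, y1, y2, y3, y4⟩, t'⟩ h' he
      simp only [Finset.mem_sigma, mem_Stars, Finset.mem_Ioc, Finset.mem_Ico] at h h'
      simp only [Sigma.mk.injEq, heq_eq_eq] at he
      obtain ⟨rfl, rfl⟩ := he
      have := h.1.2.2.uniqH hE h'.1.2.2 h.2.1 h.2.2 h'.2.1 h'.2.2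
      obtain ⟨rfl, rfl, rfl, rfl⟩ := this
      rfl
    · rintro ⟨v, t⟩ h
      simp only [Finset.mem_sigma, Finset.mem_Ioc, Finset.mem_Ico] at h
      obtain ⟨a, u, w, d, k1, k2, k3⟩ := hE.hstar h.2.1 h.2.2
      refine ⟨⟨(v, a, u, w, d), t⟩, ?_, rfl⟩
      simp only [Finset.mem_sigma, mem_Stars, Finset.mem_Ioc]
      exact ⟨⟨h.1.1, h.1.2, k1⟩, k2, k3⟩
  rw [Finset.card_sigma, Finset.card_sigma] at h1
  have h2 : ∑ x ∈ Stars n E, (x.2.2.2.1 - x.2.2.1) =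
      ((∑ x ∈ Stars n E, (Finset.Ioc x.2.2.1 x.2.2.2.1).card : ℕ) : ℤ) := by
    push_cast
    refine Finset.sum_congr rfl (fun x hx => ?_)
    have := (mem_Stars.1 hx).2.2.l2
    rw [Int.card_Ioc]
    omega
  rw [h2, h1]
  push_cast
  rw [Finset.sum_congr rfl (g := fun _ => 4 * n - 4) (fun x hx => by rw [Int.card_Ioc]; omega)]
  rw [Finset.sum_const, nsmul_eq_mul, Int.card_Ico]
  congr 1
  omega

theorem card_stars (hn : 0 < n) (hE : Tri (4 * n) E) (hP : Per n E) :
    ((Stars n E).card : ℤ) = 5 * (n - 1) := by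
  have h := five hn hE hP
  rw [sumgap hn hE] at h
  have : 4 * n * ((Stars n E).card : ℤ) = 4 * n * (5 * (n - 1)) := by rw [← h]; ring
  exact mul_left_cancel₀ (by omega) this

theorem card_reps1 (hE : Tri (4 * n) E) :
    (Stars n E).card = (Reps n E (fun l => 2 < l ∧ l ≤ 4 * n - 2)).card := by
  refine Finset.card_bij (fun x _ => (x.1, x.2.2.2.1)) ?_ ?_ ?_
  · rintro ⟨x0, x1, x2, x3, x4⟩ h
    obtain ⟨k1, k2, k3⟩ := mem_Stars.1 h
    refine (mem_Reps hE).2 ⟨k1, k2, k3.e03, ?_⟩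
    have := k3.l0
    have := k3.l1
    have := k3.l2
    have := k3.l3
    have := k3.l4
    dsimp only at *
    omega
  · rintro ⟨x0, x1, x2, x3, x4⟩ h ⟨y0, y1, y2, y3, y4⟩ h' he
    simp only [Prod.mk.injEq] at he
    obtain ⟨rfl, rfl⟩ := he
    obtain ⟨k1, k2, k3⟩ := mem_Stars.1 h
    obtain ⟨k1', k2', k3'⟩ := mem_Stars.1 h'
    obtain ⟨rfl, rfl, rfl⟩ := k3.uniqL hE k3'
    rfl
  · rintro ⟨v, t⟩ h
    obtain ⟨k1, k2, k3, k4, k5⟩ := (mem_Reps hE).1 h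
    dsimp only at *
    obtain ⟨a, b, c, hs⟩ := hE.lstar k3 (by omega) (by omega)
    exact ⟨(v, a, b, t, c), mem_Stars.2 ⟨k1, k2, hs⟩, rfl⟩

theorem Reps_or (hE : Tri (4 * n) E) {P Q R : ℤ → Prop} (h : ∀ x, R x ↔ P x ∨ Q x)
    (hd : ∀ x, P x → Q x → False) :
    (Reps n E R).card = (Reps n E P).card + (Reps n E Q).card := by
  classical
  rw [← Finset.card_union_of_disjoint]
  · congr 1
    ext x
    simp only [Finset.mem_union, mem_Reps hE, h]
    tauto
  · rw [Finset.disjoint_left]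
    intro x hx hy
    exact hd _ ((mem_Reps hE).1 hx).2.2.2 ((mem_Reps hE).1 hy).2.2.2

theorem card_last (hn : 2 ≤ n) (hE : Tri (4 * n) E) :
    ((Reps n E (fun l => l = 4 * n - 2)).card : ℤ) = n := by
  have : (Finset.Ico 0 n).card = (Reps n E (fun l => l = 4 * n - 2)).card := by
    refine Finset.card_bij (fun x _ => (x, x + 4 * n - 2)) ?_ ?_ ?_
    · intro x hx
      rw [Finset.mem_Ico] at hx
      exact (mem_Reps hE).2 ⟨hx.1, hx.2, hE.short (by dsimp only; omega) (by dsimp only; omega)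
        (by dsimp only; omega), by dsimp only; omega⟩
    · intro x hx y hy h
      exact (Prod.mk.inj h).1
    · rintro ⟨v, t⟩ h
      obtain ⟨k1, k2, k3, k4⟩ := (mem_Reps hE).1 h
      dsimp only at *
      exact ⟨v, by simp; omega, by ext <;> dsimp only; omega⟩
  rw [← this, Int.card_Ico]
  omega

theorem card_inv (hn : 2 ≤ n) (hE : Tri (4 * n) E) (hP : Per n E) {P Q : ℤ → Prop}
    (hPQ : ∀ l, P l ↔ Q (4 * n - l)) :
    (Reps n E P).card = (Reps n E Q).card := by
  refine Finset.card_bij (fun x _ => (x.2 - n * (x.2 / n), x.1 + 4 * n - n * (x.2 / n))) ?_ ?_ ?_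
  · rintro ⟨v, t⟩ h
    obtain ⟨k1, k2, k3, k4⟩ := (mem_Reps hE).1 h
    dsimp only at *
    have := red (n := n) (by omega) t
    refine (mem_Reps hE).2 ⟨this.1, this.2, ?_, ?_⟩
    · exact hP _ _ (-(n * (t / n))) ((Int.dvd_neg).2 (dvd_mul_right _ _)) (hE.sw k3)
    · have := (hPQ _).1 k4
      dsimp only
      convert this using 1
      omega
  · rintro ⟨v, t⟩ h ⟨v', t'⟩ h' he
    obtain ⟨k1, k2, k3, k4⟩ := (mem_Reps hE).1 h
    obtain ⟨k1', k2', k3', k4'⟩ := (mem_Reps hE).1 h'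
    simp only [Prod.mk.injEq] at *
    have hd : n ∣ v - v' := by
      have : v - v' = n * (t / n) - n * (t' / n) := by omega
      rw [this]
      exact dvd_sub (dvd_mul_right _ _) (dvd_mul_right _ _)
    have := dvd_small (by omega) hd (by omega) (by omega)
    omega
  · rintro ⟨v, t⟩ h
    obtain ⟨k1, k2, k3, k4⟩ := (mem_Reps hE).1 h
    dsimp only at *
    have hr := red (n := n) (by omega) t
    refine ⟨(t - n * (t / n), v + 4 * n - n * (t / n)), (mem_Reps hE).2 ⟨hr.1, hr.2, ?_, ?_⟩, ?_⟩
    · exact hP _ _ (-(n * (t / n))) ((Int.dvd_neg).2 (dvd_mul_right _ _)) (hE.sw k3)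
    · apply (hPQ _).2
      dsimp only
      convert k4 using 1
      omega
    · have e : (v + 4 * n - n * (t / n)) / n = 4 - t / n := by
        rw [show v + 4 * n - n * (t / n) = v + n * (4 - t / n) by ring,
          Int.add_mul_ediv_left _ _ (by omega), Int.ediv_eq_zero_of_lt k1 k2]
        ring
      dsimp only
      rw [e]
      ext <;> dsimp only <;> ring

theorem card_diam (hn : 2 ≤ n) (hE : Tri (4 * n) E) (hP : Per n E) :
    (Reps n E (fun l => l = 2 * n)).card ≤ 1 := by
  rw [Finset.card_le_one]
  have key : ∀ v t v' t' : ℤ, 0 ≤ v → v < v' → v' < n → E v t → t - v = 2 * n → E v' t' →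
      t' - v' = 2 * n → False := by
    intro v t v' t' h1 h2 h3 h4 h5 h6 h7
    exact hE.x3 h4 h6 (hP _ _ n dvd_rfl h4) (by omega) (by omega) (by omega) (by omega) (by omega)
      (by omega)
  rintro ⟨v, t⟩ h ⟨v', t'⟩ h'
  obtain ⟨k1, k2, k3, k4⟩ := (mem_Reps hE).1 h
  obtain ⟨k1', k2', k3', k4'⟩ := (mem_Reps hE).1 h'
  dsimp only at *
  rcases lt_trichotomy v v' with l | l | l
  · exact (key _ _ _ _ k1 l k2' k3 k4 k3' k4').elim
  · ext <;> dsimp only <;> omega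
  · exact (key _ _ _ _ k1' l k2 k3' k4' k3 k4).elim

theorem count (hn : 2 ≤ n) (hE : Tri (4 * n) E) (hP : Per n E) :
    ((Reps n E (fun l => 2 < l ∧ l ≤ 2 * n)).card : ℤ) = 2 * (n - 1) := by
  have h1 := card_stars (by omega) hE hP
  have h2 := card_reps1 hE
  have h3 := Reps_or hE (P := fun l => 2 < l ∧ l < 4 * n - 2) (Q := fun l => l = 4 * n - 2)
    (R := fun l => 2 < l ∧ l ≤ 4 * n - 2) (fun x => by omega) (fun x => by omega)
  have h4 := card_last hn hE
  have h5 := Reps_or hE (P := fun l => 2 < l ∧ l ≤ 2 * n) (Q := fun l => 2 * n < l ∧ l < 4 * n - 2)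
    (R := fun l => 2 < l ∧ l < 4 * n - 2) (fun x => by omega) (fun x => by omega)
  have h6 := Reps_or hE (P := fun l => 2 < l ∧ l < 2 * n) (Q := fun l => l = 2 * n)
    (R := fun l => 2 < l ∧ l ≤ 2 * n) (fun x => by omega) (fun x => by omega)
  have h7 := card_inv hn hE hP (P := fun l => 2 < l ∧ l < 2 * n)
    (Q := fun l => 2 * n < l ∧ l < 4 * n - 2) (fun l => by omega)
  have h8 := card_diam hn hE hP
  omega

end Multitriangulation

namespace Multitriangulation

/-- The edge of the polygon with given lifts of its endpoints. -/
def ed (M : ℕ) (i j : ℤ) : Sym2 (ZMod M) := s((i : ZMod M), (j : ZMod M))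

/-- The lift of a set of polygon edges to the integers. -/
def Lift (M : ℕ) (T : Set (Sym2 (ZMod M))) (i j : ℤ) : Prop :=
  i < j ∧ j < i + M ∧ ed M i j ∈ T

/-- The set of polygon edges with given lift. -/
def TF (M : ℕ) (F : ℤ → ℤ → Prop) : Set (Sym2 (ZMod M)) := {e | ∃ i j, F i j ∧ e = ed M i j}

variable {M : ℕ}

theorem ed_orb {i j k l : ℤ} (h1 : i < j) (h2 : j < i + M) (h3 : k < l) (h4 : l < k + M)
    (h : ed M i j = ed M k l) : Orb M M i j k l := by
  have hM : (0 : ℤ) < M := by omega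
  rw [ed, ed, Sym2.eq_iff] at h
  simp only [ZMod.intCast_eq_intCast_iff_dvd_sub] at h
  rcases h with ⟨h5, h6⟩ | ⟨h5, h6⟩
  · have := mulcases hM (dvd_sub h5 h6)
    exact ⟨k - i, h5, by omega⟩
  · have := mulcases hM (dvd_sub h5 h6)
    refine ⟨k - j, h6, ?_⟩
    omega

theorem ed_sh {i j k l : ℤ} (h : Orb M M i j k l) : ed M k l = ed M i j := by
  obtain ⟨q, ⟨r, rfl⟩, ⟨rfl, rfl⟩ | ⟨rfl, rfl⟩⟩ := h
  · simp [ed]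
  · simp [ed, Sym2.eq_swap]

theorem ed_swap (i j : ℤ) : ed M j (i + M) = ed M i j := ed_sh ((Orb.self _ _ _ _).sw dvd_rfl)

theorem val_cast [NeZero M] {a : ℤ} (h1 : 0 ≤ a) (h2 : a < M) : (((a : ZMod M).val : ℕ) : ℤ) = a := by
  rw [ZMod.val_intCast]
  exact Int.emod_eq_of_lt h1 h2

theorem cast_val [NeZero M] (x : ZMod M) : (((x.val : ℕ) : ℤ) : ZMod M) = x := by simp

theorem ed_repr [NeZero M] {e : Sym2 (ZMod M)} (h : ¬ e.IsDiag) :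
    ∃ i j : ℤ, i < j ∧ j < i + M ∧ e = ed M i j := by
  induction e with
  | _ x y =>
    have hxy : x ≠ y := by simpa using h
    have h1 : x.val ≠ y.val := fun k => hxy (ZMod.val_injective M k)
    have h2 := ZMod.val_lt x
    have h3 := ZMod.val_lt y
    rcases lt_or_gt_of_ne h1 with k | k
    · exact ⟨x.val, y.val, by omega, by omega, by rw [ed, cast_val, cast_val]⟩
    · exact ⟨y.val, x.val, by omega, by omega, by rw [ed, cast_val, cast_val, Sym2.eq_swap]⟩

theorem ed_notDiag {i j : ℤ} (h1 : i < j) (h2 : j < i + M) : ¬ (ed M i j).IsDiag := by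
  intro h
  rw [ed, Sym2.mk_isDiag_iff, ZMod.intCast_eq_intCast_iff_dvd_sub] at h
  have := mulcases (by omega) h
  omega

theorem cross_iff [NeZero M] {e f : Sym2 (ZMod M)} : PolyCrosses e f ↔
    ∃ a b c d : ℤ, a < b ∧ b < c ∧ c < d ∧ d < a + M ∧ e = ed M a c ∧ f = ed M b d := by
  constructor
  · rintro ⟨x, y, z, w, rfl, rfl, h⟩
    have hp : ∀ x y : ZMod M, s(x, y) = ed M (min x.val y.val) (max x.val y.val) := by
      intro x y
      rcases le_total x.val y.val with k | k
      · rw [min_eq_left (by exact_mod_cast k), max_eq_right (by exact_mod_cast k), ed, cast_val,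
          cast_val]
      · rw [min_eq_right (by exact_mod_cast k), max_eq_left (by exact_mod_cast k), ed, cast_val,
          cast_val, Sym2.eq_swap]
    have h1 := ZMod.val_lt x
    have h2 := ZMod.val_lt y
    have h3 := ZMod.val_lt z
    have h4 := ZMod.val_lt w
    rw [hp x y, hp z w]
    rcases h with ⟨k1, k2, k3⟩ | ⟨k1, k2, k3⟩
    · exact ⟨_, _, _, _, by omega, by omega, by omega, by omega, rfl, rfl⟩
    · exact ⟨_, max (z.val : ℤ) w.val, _, min (z.val : ℤ) w.val + M, by omega, by omega, by omega,
        by omega, rfl, (ed_swap _ _).symm⟩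
  · rintro ⟨a, b, c, d, k1, k2, k3, k4, rfl, rfl⟩
    have hM : (0 : ℤ) < M := by omega
    obtain ⟨q, hq, ha⟩ : ∃ q, (M : ℤ) ∣ q ∧ 0 ≤ a + q ∧ a + q < M := by
      refine ⟨-(M * (a / M)), (Int.dvd_neg).2 (dvd_mul_right _ _), ?_⟩
      have := red hM a
      omega
    have hs : ∀ i j, ed M i j = ed M (i + q) (j + q) := fun i j =>
      (ed_sh ((Orb.self _ _ _ _).sh hq)).symm
    have hs' : ∀ i j, ed M i j = ed M (j + q - M) (i + q) := by
      intro i j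
      rw [hs, ← ed_swap (j + q - M) (i + q)]
      congr 1; ring
    have hs'' : ∀ i j, ed M i j = ed M (i + q - M) (j + q - M) := by
      intro i j
      rw [hs', ← ed_swap (i + q - M) (j + q - M)]
      congr 1; ring
    have key : ∀ a c b d : ℤ, 0 ≤ a → a < c → c < M → 0 ≤ b → b < d → d < M →
        ((a < b ∧ b < c ∧ c < d) ∨ (b < a ∧ a < d ∧ d < c)) → PolyCrosses (ed M a c) (ed M b d) := by
      intro a c b d l1 l2 l3 l4 l5 l6 l7
      refine ⟨a, c, b, d, rfl, rfl, ?_⟩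
      have e1 := val_cast (M := M) l1 (by omega)
      have e2 := val_cast (M := M) (a := c) (by omega) (by omega)
      have e3 := val_cast (M := M) l4 (by omega)
      have e4 := val_cast (M := M) (a := d) (by omega) (by omega)
      unfold crossIndex
      omega
    by_cases c1 : d + q < M
    · rw [hs a c, hs b d]; apply key <;> omega
    by_cases c2 : c + q < M
    · rw [hs a c, hs' b d]; apply key <;> omega
    by_cases c3 : b + q < M
    · rw [hs' a c, hs' b d]; apply key <;> omega
    · rw [hs' a c, hs'' b d]; apply key <;> omega

theorem cross_symm [NeZero M] {e f : Sym2 (ZMod M)} (h : PolyCrosses e f) : PolyCrosses f e := by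
  rw [cross_iff] at h ⊢
  obtain ⟨a, b, c, d, k1, k2, k3, k4, rfl, rfl⟩ := h
  exact ⟨b, c, d, a + M, k2, k3, k4, by omega, rfl, (ed_swap _ _).symm⟩

theorem cross_ne [NeZero M] {e f : Sym2 (ZMod M)} (h : PolyCrosses e f) : e ≠ f := by
  rw [cross_iff] at h
  obtain ⟨a, b, c, d, k1, k2, k3, k4, rfl, rfl⟩ := h
  intro h
  obtain ⟨q, hq, hq'⟩ := ed_orb (by omega) (by omega) (by omega) (by omega) h
  have := mulcases (by omega) hq
  omega

theorem cross_lift [NeZero M] {f : Sym2 (ZMod M)} {a c : ℤ} (h1 : a < c) (h2 : c < a + M)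
    (h : PolyCrosses (ed M a c) f) :
    ∃ b d : ℤ, a < b ∧ b < c ∧ c < d ∧ d < a + M ∧ f = ed M b d := by
  rw [cross_iff] at h
  obtain ⟨a', b, c', d, k1, k2, k3, k4, k5, rfl⟩ := h
  obtain ⟨q, hq, ⟨e1, e2⟩ | ⟨e1, e2⟩⟩ := ed_orb (by omega) (by omega) (by omega) (by omega) k5.symm
  · exact ⟨b + q, d + q, by omega, by omega, by omega, by omega,
      (ed_sh ((Orb.self _ _ _ _).sh hq)).symm⟩
  · exact ⟨d + q, b + M + q, by omega, by omega, by omega, by omega,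
      (ed_sh (((Orb.self _ _ _ _).sw dvd_rfl).sh hq)).symm⟩

theorem cf_iff [NeZero M] {T : Set (Sym2 (ZMod M))} : PolyCrossingFree 3 T ↔
    ∀ a b c d e f : ℤ, a < b → b < c → c < d → d < e → e < f → f < a + M →
      ed M a d ∈ T → ed M b e ∈ T → ed M c f ∈ T → False := by
  classical
  constructor
  · intro h a b c d e f k1 k2 k3 k4 k5 k6 m1 m2 m3
    have x1 : PolyCrosses (ed M a d) (ed M b e) :=
      cross_iff.2 ⟨a, b, d, e, by omega, by omega, by omega, by omega, rfl, rfl⟩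
    have x2 : PolyCrosses (ed M a d) (ed M c f) :=
      cross_iff.2 ⟨a, c, d, f, by omega, by omega, by omega, by omega, rfl, rfl⟩
    have x3 : PolyCrosses (ed M b e) (ed M c f) :=
      cross_iff.2 ⟨b, c, e, f, by omega, by omega, by omega, by omega, rfl, rfl⟩
    apply h
    refine ⟨{ed M a d, ed M b e, ed M c f}, ?_, ?_, ?_⟩
    · intro x hx
      simp only [Finset.coe_insert, Finset.coe_singleton, Set.mem_insert_iff,
        Set.mem_singleton_iff] at hx
      rcases hx with rfl | rfl | rfl <;> assumption
    · exact Finset.card_eq_three.2 ⟨_, _, _, cross_ne x1, cross_ne x2, cross_ne x3, rfl⟩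
    · intro x hx y hy hxy
      simp only [Finset.mem_insert, Finset.mem_singleton] at hx hy
      rcases hx with rfl | rfl | rfl <;> rcases hy with rfl | rfl | rfl <;>
        first
        | exact absurd rfl hxy
        | assumption
        | (apply cross_symm; assumption)
  · rintro h ⟨S, hS, hc, hx⟩
    obtain ⟨x, y, z, hxy, hxz, hyz, rfl⟩ := Finset.card_eq_three.1 hc
    have c1 := hx x (by simp) y (by simp) hxy
    have c2 := hx x (by simp) z (by simp) hxz
    have c3 := hx y (by simp) z (by simp) hyz
    have m1 : x ∈ T := hS (by simp)
    have m2 : y ∈ T := hS (by simp)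
    have m3 : z ∈ T := hS (by simp)
    obtain ⟨a, b, c, d, k1, k2, k3, k4, rfl, rfl⟩ := cross_iff.1 c1
    obtain ⟨p, r, l1, l2, l3, l4, rfl⟩ := cross_lift (by omega) (by omega) c2
    obtain ⟨p', r', n1, n2, n3, n4, n5⟩ := cross_lift (by omega) (by omega) c3
    obtain ⟨q, hq, hq'⟩ := ed_orb (by omega) (by omega) (by omega) (by omega) n5
    have := mulcases (by omega) hq
    have : (b < p ∧ d < r) ∨ (p < b ∧ r < d) := by omega
    rcases this with ⟨o1, o2⟩ | ⟨o1, o2⟩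
    · exact h a b p c d r k1 o1 l2 k3 o2 l4 m1 m2 m3
    · exact h a p b c r d l1 o1 k2 l3 o2 k4 m1 m3 m2

theorem Lift.isSw (T : Set (Sym2 (ZMod M))) : Sw M (Lift M T) := by
  constructor
  · rintro i j ⟨h1, h2, h3⟩
    exact ⟨by omega, by omega, by rwa [ed_swap]⟩
  · rintro i j ⟨h1, h2, h3⟩
    exact ⟨by omega, by omega, by rwa [ed_swap] at h3⟩

theorem Lift.per (T : Set (Sym2 (ZMod M))) : Per M (Lift M T) := by
  rintro i j q hq ⟨h1, h2, h3⟩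
  exact ⟨by omega, by omega, by rwa [ed_sh ((Orb.self _ _ _ _).sh hq)]⟩

theorem Lift.tri [NeZero M] {T : Set (Sym2 (ZMod M))} (h : IsPolyTriangulation T) :
    Tri M (Lift M T) where
  lt := fun k => k.1
  lt' := fun k => k.2.1
  sw := (Lift.isSw T).sw
  sw' := (Lift.isSw T).sw'
  cf := by
    intro i j hij a c b d k1 k2 k3 k4 k5 k6 k7 k8
    exact cf_iff.1 h.2.1 i a c j b d k1 k2 k3 k4 k5 k6 hij.2.2 k7.2.2 k8.2.2
  mx := by
    intro i j h1 h2 h3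
    refine ⟨h1, h2, ?_⟩
    have key : insert (ed M i j) T = T := by
      apply h.2.2
      · intro e he
        rcases he with rfl | he
        · exact ed_notDiag h1 h2
        · exact h.1 e he
      · rw [cf_iff]
        have first : ∀ a b c d e f : ℤ, a < b → b < c → c < d → d < e → e < f → f < a + M →
            ed M a d = ed M i j → ed M b e ∈ insert (ed M i j) T → ed M c f ∈ insert (ed M i j) T →
            False := by
          intro a b c d e f k1 k2 k3 k4 k5 k6 m1 m2 m3
          have x1 : PolyCrosses (ed M a d) (ed M b e) :=
            cross_iff.2 ⟨a, b, d, e, by omega, by omega, by omega, by omega, rfl, rfl⟩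
          have x2 : PolyCrosses (ed M a d) (ed M c f) :=
            cross_iff.2 ⟨a, c, d, f, by omega, by omega, by omega, by omega, rfl, rfl⟩
          have m2' := m2.resolve_left (fun k => cross_ne x1 (m1.trans k.symm))
          have m3' := m3.resolve_left (fun k => cross_ne x2 (m1.trans k.symm))
          have ho := ed_orb h1 h2 (by omega) (by omega) m1.symm
          exact h3.orb (Lift.isSw T) (Lift.per T) ho b c e f k1 k2 k3 k4 k5 k6
            ⟨by omega, by omega, m2'⟩ ⟨by omega, by omega, m3'⟩
        intro a b c d e f k1 k2 k3 k4 k5 k6 m1 m2 m3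
        have s1 := ed_swap (M := M) a d
        have s2 := ed_swap (M := M) b e
        rcases m1 with m1 | m1'
        · exact first a b c d e f k1 k2 k3 k4 k5 k6 m1 m2 m3
        rcases m2 with m2 | m2'
        · exact first b c d e f (a + M) k2 k3 k4 k5 k6 (by omega) m2 m3 (by rw [s1]; exact Or.inr m1')
        rcases m3 with m3 | m3'
        · exact first c d e f (a + M) (b + M) k3 k4 k5 k6 (by omega) (by omega) m3
            (by rw [s1]; exact Or.inr m1') (by rw [s2]; exact Or.inr m2')
        · exact cf_iff.1 h.2.1 a b c d e f k1 k2 k3 k4 k5 k6 m1' m2' m3'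
      · exact Set.subset_insert _ _
    rw [← key]
    exact Or.inl rfl

theorem TF_iff {F : ℤ → ℤ → Prop} (hF : Tri M F) {i j : ℤ} (h1 : i < j) (h2 : j < i + M) :
    ed M i j ∈ TF M F ↔ F i j := by
  constructor
  · rintro ⟨k, l, h3, h4⟩
    exact (ed_orb (hF.lt h3) (hF.lt' h3) h1 h2 h4.symm).sub hF.isSw (Per.of_tri hF) h3
  · intro h
    exact ⟨i, j, h, rfl⟩

theorem Lift_TF {F : ℤ → ℤ → Prop} (hF : Tri M F) : Lift M (TF M F) = F := by
  funext i j
  apply propext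
  constructor
  · rintro ⟨h1, h2, h3⟩
    exact (TF_iff hF h1 h2).1 h3
  · intro h
    exact ⟨hF.lt h, hF.lt' h, i, j, h, rfl⟩

theorem TF_Lift [NeZero M] {T : Set (Sym2 (ZMod M))} (hT : PolyValid T) : TF M (Lift M T) = T := by
  ext e
  constructor
  · rintro ⟨i, j, h, rfl⟩
    exact h.2.2
  · intro h
    obtain ⟨i, j, h1, h2, rfl⟩ := ed_repr (hT e h)
    exact ⟨i, j, ⟨h1, h2, h⟩, rfl⟩

theorem TF_tri [NeZero M] {F : ℤ → ℤ → Prop} (hF : Tri M F) : IsPolyTriangulation (TF M F) := by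
  refine ⟨?_, ?_, ?_⟩
  · rintro e ⟨i, j, h, rfl⟩
    exact ed_notDiag (hF.lt h) (hF.lt' h)
  · rw [cf_iff]
    intro a b c d e f k1 k2 k3 k4 k5 k6 m1 m2 m3
    rw [TF_iff hF (by omega) (by omega)] at m1 m2 m3
    exact hF.x3 m1 m2 m3 k1 k2 k3 k4 k5 k6
  · intro T' h1 h2 h3
    apply Set.Subset.antisymm _ h3
    intro e he
    obtain ⟨i, j, l1, l2, rfl⟩ := ed_repr (h1 e he)
    refine ⟨i, j, hF.mx l1 l2 ?_, rfl⟩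
    intro a c b d k1 k2 k3 k4 k5 k6 k7 k8
    exact cf_iff.1 h2 i a c j b d k1 k2 k3 k4 k5 k6 he (h3 ⟨_, _, k7, rfl⟩) (h3 ⟨_, _, k8, rfl⟩)

end Multitriangulation

namespace Multitriangulation

theorem per_step {n : ℤ} {E : ℤ → ℤ → Prop} (h : ∀ i j, E i j ↔ E (i + n) (j + n)) : Per n E := by
  have key : ∀ k : ℕ, ∀ i j, (E i j → E (i + k * n) (j + k * n)) ∧
      (E (i + k * n) (j + k * n) → E i j) := by
    intro k
    induction k with
    | zero => intro i j; simp
    | succ k ih =>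
      intro i j
      have e1 : i + ((k + 1 : ℕ) : ℤ) * n = (i + k * n) + n := by push_cast; ring
      have e2 : j + ((k + 1 : ℕ) : ℤ) * n = (j + k * n) + n := by push_cast; ring
      rw [e1, e2, ← h]
      exact ih i j
  rintro i j q ⟨r, rfl⟩ hE
  obtain ⟨k, rfl | rfl⟩ := Int.eq_nat_or_neg r
  · rw [mul_comm]
    exact (key k i j).1 hE
  · apply (key k _ _).2
    convert hE using 1 <;> ring

variable {N : ℕ}

theorem map_ed {M : ℕ} (c : ℕ) (i j : ℤ) :
    Sym2.map (· + ((c : ℕ) : ZMod M)) (ed M i j) = ed M (i + c) (j + c) := by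
  simp [ed]

theorem lift_per {M : ℕ} {T : Set (Sym2 (ZMod M))} (h : PolyPeriodic N T) :
    Per N (Lift M T) := by
  apply per_step
  intro i j
  have h1 := h (ed M i j)
  rw [map_ed] at h1
  unfold Lift
  rw [← h1]
  constructor
  · rintro ⟨a, b, c⟩; exact ⟨by omega, by omega, c⟩
  · rintro ⟨a, b, c⟩; exact ⟨by omega, by omega, c⟩

theorem TF_per {M : ℕ} {F : ℤ → ℤ → Prop} (hP : Per N F) : PolyPeriodic N (TF M F) := by
  intro e
  constructor
  · rintro ⟨i, j, h, rfl⟩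
    rw [map_ed]
    exact ⟨_, _, hP _ _ _ dvd_rfl h, rfl⟩
  · rintro ⟨i, j, h, he⟩
    refine ⟨i - N, j - N, hP _ _ (-N) ((Int.dvd_neg).2 dvd_rfl) h, ?_⟩
    have e1 : ed M i j = Sym2.map (· + ((N : ℕ) : ZMod M)) (ed M (i - N) (j - N)) := by
      rw [map_ed]
      congr 1 <;> ring
    rw [e1] at he
    exact Sym2.map.injective (add_left_injective _) he

theorem tilde_iff {v t : ℤ} {e : Sym2 (ZMod (4 * N))} : e ∈ tilde N (ed (4 * N) v t) ↔
    ∃ k l, Orb (4 * (N : ℤ)) N v t k l ∧ e = ed (4 * N) k l := by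
  have hM : (((4 * N : ℕ)) : ℤ) = 4 * (N : ℤ) := by push_cast; rfl
  unfold tilde
  rw [map_ed, map_ed, map_ed]
  simp only [Set.mem_insert_iff, Set.mem_singleton_iff]
  constructor
  · have key : ∀ c : ℤ, Orb (4 * (N : ℤ)) N v t (v + N * c) (t + N * c) :=
      fun c => (Orb.self _ _ _ _).sh (dvd_mul_right _ _)
    rintro (rfl | rfl | rfl | rfl)
    · exact ⟨v, t, Orb.self _ _ _ _, rfl⟩
    · exact ⟨_, _, key 1, by congr 1 <;> ring⟩
    · exact ⟨_, _, key 2, by congr 1 <;> push_cast <;> ring⟩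
    · exact ⟨_, _, key 3, by congr 1 <;> push_cast <;> ring⟩
  · rintro ⟨k, l, ⟨q, ⟨r, rfl⟩, h⟩, rfl⟩
    have h1 : ed (4 * N) k l = ed (4 * N) (v + N * r) (t + N * r) := by
      rcases h with ⟨rfl, rfl⟩ | ⟨rfl, rfl⟩
      · rfl
      · rw [← ed_swap (v + N * r) (t + N * r), hM]
        congr 1; ring
    have h2 : ed (4 * N) k l = ed (4 * N) (v + N * (r % 4)) (t + N * (r % 4)) := by
      rw [h1]
      apply ed_sh
      have := (Orb.self (4 * N : ℕ) (4 * N : ℕ) (v + N * (r % 4)) (t + N * (r % 4))).sh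
        (s := (4 * N : ℕ) * (r / 4)) (dvd_mul_right _ _)
      have e : (N : ℤ) * r = N * (r % 4) + (4 * N : ℕ) * (r / 4) := by
        conv_lhs => rw [← Int.emod_add_mul_ediv r 4]
        push_cast
        ring
      rw [e, ← add_assoc, ← add_assoc]
      exact this
    rw [h2]
    have h3 : r % 4 = 0 ∨ r % 4 = 1 ∨ r % 4 = 2 ∨ r % 4 = 3 := by omega
    rcases h3 with h3 | h3 | h3 | h3 <;> rw [h3]
    · left; simp
    · right; left; simp
    · right; right; left; push_cast; congr 1 <;> ring
    · right; right; right; push_cast; congr 1 <;> ring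

theorem rel_of {v t : ℤ} (h1 : v + 2 < t) (h2 : t < v + 4 * N - 2) :
    PolyRelevant N (ed (4 * N) v t) := by
  have hM : (((4 * N : ℕ)) : ℤ) = 4 * (N : ℤ) := by push_cast; rfl
  have hN : 0 < 4 * (N : ℤ) := by omega
  obtain ⟨q, hq, ha⟩ : ∃ q, (4 * (N : ℤ)) ∣ q ∧ 0 ≤ v + q ∧ v + q < 4 * N := by
    refine ⟨-(4 * N * (v / (4 * N))), (Int.dvd_neg).2 (dvd_mul_right _ _), ?_⟩
    have := red hN v
    omega
  have hs : ed (4 * N) v t = ed (4 * N) (v + q) (t + q) :=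
    (ed_sh ((Orb.self _ _ _ _).sh (hM ▸ hq))).symm
  have hs' : ed (4 * N) v t = ed (4 * N) (t + q - 4 * N) (v + q) := by
    rw [hs, ← ed_swap (t + q - 4 * N) (v + q), hM]
    congr 1; ring
  have key : ∀ a b : ℤ, 0 ≤ a → a + 2 < b → b < a + 4 * N - 2 → b < 4 * N →
      PolyRelevant N (ed (4 * N) a b) := by
    intro a b k1 k2 k3 k4
    lift a to ℕ using k1
    lift b to ℕ using (by omega)
    exact ⟨a, b, by omega, by omega, by simp [ed], by omega, by omega⟩
  by_cases c : t + q < 4 * N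
  · rw [hs]; apply key <;> omega
  · rw [hs']; apply key <;> omega

theorem of_rel {e : Sym2 (ZMod (4 * N))} (h : PolyRelevant N e) :
    ∃ v t : ℤ, v + 2 < t ∧ t < v + 4 * N - 2 ∧ e = ed (4 * N) v t := by
  obtain ⟨a, b, h1, h2, rfl, h3, h4⟩ := h
  exact ⟨a, b, by omega, by omega, by simp [ed]⟩

/-- Every relevant pair has a normalised representative in its orbit. -/
theorem norm_rep {v t : ℤ} (h1 : v + 2 < t) (h2 : t < v + 4 * N - 2) :
    ∃ v' t' : ℤ, Orb (4 * (N : ℤ)) N v t v' t' ∧ 0 ≤ v' ∧ v' < N ∧ 2 < t' - v' ∧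
      t' - v' ≤ 2 * N := by
  have key : ∀ x : ℤ, ∃ q, (N : ℤ) ∣ q ∧ 0 ≤ x + q ∧ x + q < N := by
    intro x
    refine ⟨-(N * (x / N)), (Int.dvd_neg).2 (dvd_mul_right _ _), ?_⟩
    have := red (n := (N : ℤ)) (by omega) x
    omega
  by_cases c : t - v ≤ 2 * N
  · obtain ⟨q, hq, k1, k2⟩ := key v
    exact ⟨v + q, t + q, (Orb.self _ _ _ _).sh hq, by omega, by omega, by omega, by omega⟩
  · obtain ⟨q, hq, k1, k2⟩ := key t
    exact ⟨t + q, v + 4 * N + q, ((Orb.self _ _ _ _).sw (dvd_mul_left _ _)).sh hq, by omega,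
      by omega, by omega, by omega⟩

theorem norm_unique {v t v' t' : ℤ} (h : Orb (4 * (N : ℤ)) N v t v' t') (h1 : 0 ≤ v) (h2 : v < N)
    (h3 : t - v ≤ 2 * N) (k1 : 0 ≤ v') (k2 : v' < N) (k3 : t' - v' ≤ 2 * N) :
    v = v' ∧ t = t' := by
  obtain ⟨q, hq, ⟨rfl, rfl⟩ | ⟨rfl, rfl⟩⟩ := h
  · have := dvd_small (by omega) hq (by omega) (by omega)
    omega
  · have e : (N : ℤ) ∣ q + 2 * N := dvd_add hq (dvd_mul_left _ _)
    have := dvd_small (by omega) e (by omega) (by omega)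
    omega

theorem flip_count (n : ℕ) (hn : 1 ≤ n)
    (T : Set (Sym2 (ZMod (4 * n)))) (hT : IsPeriodicPolyTriangulation n T) :
    {T' : Set (Sym2 (ZMod (4 * n))) | IsPeriodicPolyTriangulation n T' ∧
        T' ≠ T ∧ ∃ e, e ∈ T ∧ PolyRelevant n e ∧ T \ T' = tilde n e ∧
          T \ tilde n e ⊆ T'}.ncard = 2 * (n - 1) := by
  haveI : NeZero (4 * n) := ⟨by omega⟩
  have hM : (((4 * n : ℕ)) : ℤ) = 4 * (n : ℤ) := by push_cast; rfl
  rcases Nat.lt_or_ge n 2 with h2 | h2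
  · have h3 : n = 1 := by omega
    subst h3
    rw [show 2 * (1 - 1) = 0 from rfl]
    rw [Set.ncard_eq_zero (Set.toFinite _)]
    ext T'
    simp only [Set.mem_setOf_eq, Set.mem_empty_iff_false, iff_false]
    rintro ⟨-, -, e, -, ⟨a, b, -, -, -, k1, k2⟩, -⟩
    omega
  have triL : ∀ T' : Set (Sym2 (ZMod (4 * n))), IsPeriodicPolyTriangulation n T' →
      Tri (4 * (n : ℤ)) (Lift (4 * n) T') ∧ Per n (Lift (4 * n) T') := by
    intro T' h
    have := Lift.tri h.1
    rw [hM] at this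
    exact ⟨this, lift_per h.2⟩
  obtain ⟨hE, hP⟩ := triL T hT
  set E := Lift (4 * n) T with hEdef
  have hT0 : TF (4 * n) E = T := TF_Lift hT.1.1
  have hc := count (n := (n : ℤ)) (by omega) hE hP
  have hdv : (n : ℤ) ∣ 4 * n := dvd_mul_left _ _
  -- the flips of the normalised edges
  have hflip : ∀ x ∈ Reps n E (fun l => 2 < l ∧ l ≤ 2 * n), FlipOK (4 * (n : ℤ)) n E x.1 x.2 := by
    intro x hx
    obtain ⟨k1, k2, k3, k4, k5⟩ := (mem_Reps hE).1 hx
    exact flipOK hE hP k3 (by omega) (by omega)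
  choose! G hG hGu using hflip
  have diff : ∀ (F : ℤ → ℤ → Prop) (v t : ℤ), E v t → Tri (4 * (n : ℤ)) F → Per n F →
      (∀ i j, Rem (4 * (n : ℤ)) n E v t i j → F i j) → ¬ F v t →
      ∀ i j, (E i j ∧ ¬ F i j) ↔ Orb (4 * (n : ℤ)) n v t i j := by
    intro F v t hvt hF hFP hR hn i j
    constructor
    · rintro ⟨a, b⟩
      by_contra c
      exact b (hR i j ⟨a, c⟩)
    · intro h
      exact ⟨h.sub hE.isSw hP hvt, fun k => hn ((h.symm hdv).sub hF.isSw hFP k)⟩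
  have memiff : ∀ F : ℤ → ℤ → Prop, Tri (4 * (n : ℤ)) F → ∀ i j : ℤ, i < j → j < i + 4 * n →
      (ed (4 * n) i j ∈ TF (4 * n) F ↔ F i j) := by
    intro F hF i j a b
    rw [← hM] at hF b
    exact TF_iff hF a b
  have hcard : Set.ncard (↑(Reps n E (fun l => 2 < l ∧ l ≤ 2 * n)) : Set (ℤ × ℤ)) = 2 * (n - 1) := by
    rw [Set.ncard_coe_finset]
    omega
  rw [← hcard]
  symm
  apply Set.ncard_congr (fun x _ => TF (4 * n) (G x))
  · intro x hx
    have hx' := Finset.mem_coe.1 hx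
    obtain ⟨g1, g2, g3, g4⟩ := hG x hx'
    obtain ⟨k1, k2, k3, k4, k5⟩ := (mem_Reps hE).1 hx'
    have hd := diff (G x) x.1 x.2 k3 g1 g2 g3 g4
    have hx1 : ed (4 * n) x.1 x.2 ∈ T := k3.2.2
    have hx2 : ed (4 * n) x.1 x.2 ∉ TF (4 * n) (G x) := by
      rw [memiff _ g1 _ _ (hE.lt k3) (hE.lt' k3)]
      exact g4
    have hdt : T \ TF (4 * n) (G x) = tilde n (ed (4 * n) x.1 x.2) := by
      ext e
      rw [tilde_iff]
      constructor
      · rintro ⟨a, b⟩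
        rw [← hT0] at a
        obtain ⟨i, j, c, rfl⟩ := a
        refine ⟨i, j, (hd i j).1 ⟨c, fun d => b ⟨i, j, d, rfl⟩⟩, rfl⟩
      · rintro ⟨i, j, c, rfl⟩
        obtain ⟨a, b⟩ := (hd i j).2 c
        refine ⟨a.2.2, ?_⟩
        rw [memiff _ g1 _ _ (hE.lt a) (hE.lt' a)]
        exact b
    refine ⟨⟨TF_tri (by rw [hM]; exact g1), TF_per g2⟩, ?_, ed (4 * n) x.1 x.2, hx1,
      rel_of (by omega) (by omega), hdt, ?_⟩
    · intro h
      rw [h] at hx2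
      exact hx2 hx1
    · rw [← hdt]
      intro e he
      by_contra c
      exact he.2 ⟨he.1, c⟩
  · intro x y hx hy hxy
    have hx' := Finset.mem_coe.1 hx
    have hy' := Finset.mem_coe.1 hy
    obtain ⟨g1, g2, g3, g4⟩ := hG x hx'
    obtain ⟨g1', g2', g3', g4'⟩ := hG y hy'
    obtain ⟨k1, k2, k3, k4, k5⟩ := (mem_Reps hE).1 hx'
    obtain ⟨k1', k2', k3', k4', k5'⟩ := (mem_Reps hE).1 hy'
    have hGG : G x = G y := by
      rw [← Lift_TF (M := 4 * n) (F := G x) (by rw [hM]; exact g1),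
        ← Lift_TF (M := 4 * n) (F := G y) (by rw [hM]; exact g1')]
      exact congrArg _ hxy
    have ho := (diff (G x) x.1 x.2 k3 g1 g2 g3 g4 y.1 y.2).1 ⟨k3', by rw [hGG]; exact g4'⟩
    obtain ⟨u1, u2⟩ := norm_unique ho k1 k2 k5 k1' k2' k5'
    exact Prod.ext u1 u2
  · rintro T' ⟨hT', hne, e, he, hr, hd, hs⟩
    obtain ⟨hF, hFP⟩ := triL T' hT'
    obtain ⟨v, t, l1, l2, rfl⟩ := of_rel hr
    obtain ⟨v', t', ho, o1, o2, o3, o4⟩ := norm_rep l1 l2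
    have hvt : E v t := ⟨by omega, by omega, he⟩
    have hvt' : E v' t' := ho.sub hE.isSw hP hvt
    have hx : (v', t') ∈ Reps n E (fun l => 2 < l ∧ l ≤ 2 * n) :=
      (mem_Reps hE).2 ⟨o1, o2, hvt', o3, o4⟩
    refine ⟨(v', t'), Finset.mem_coe.2 hx, ?_⟩
    have : Lift (4 * n) T' = G (v', t') := by
      apply hGu _ hx
      refine ⟨hF, hFP, ?_, ?_⟩
      · rintro i j ⟨a, b⟩
        refine ⟨a.1, a.2.1, hs ⟨a.2.2, ?_⟩⟩
        rw [tilde_iff]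
        rintro ⟨k, l, c1, c2⟩
        apply b
        have c3 : E k l := c1.sub hE.isSw hP hvt
        obtain ⟨q, hq, hq'⟩ := ed_orb c3.1 c3.2.1 a.1 a.2.1 c2.symm
        rw [hM] at hq hq'
        have c4 : Orb (4 * (n : ℤ)) n v t i j :=
          (Orb.congr hdv c1).2 ⟨q, hdv.trans hq, hq'⟩
        exact (Orb.congr hdv ho).1 c4
      · rintro ⟨-, -, a⟩
        have : ed (4 * n) v' t' ∈ T \ T' := by
          rw [hd, tilde_iff]
          exact ⟨_, _, ho, rfl⟩
        exact this.2 a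
    change TF (4 * n) (G (v', t')) = T'
    rw [← this]
    exact TF_Lift hT'.1.1

end Multitriangulation

namespace Multitriangulation

/-- The flip graph of `n`-periodic 2-triangulations on the
`4n`-gon is regular of degree `2(n−1)`: for every `n`-periodic
2-triangulation `T`, the number of `n`-periodic 2-triangulations `T' ≠ T`
such that `T ∖ T'` is the rotation orbit `ẽ` of a single 2-relevant edge
`e ∈ T` (and `T' ⊇ T ∖ ẽ`) is exactly `2(n−1)`. -/
theorem flip_graph_regular (n : ℕ) (hn : 1 ≤ n)
    (T : Set (Sym2 (ZMod (4 * n)))) (hT : IsPeriodicPolyTriangulation n T) :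
    {T' : Set (Sym2 (ZMod (4 * n))) | IsPeriodicPolyTriangulation n T' ∧
        T' ≠ T ∧ ∃ e, e ∈ T ∧ PolyRelevant n e ∧ T \ T' = tilde n e ∧
          T \ tilde n e ⊆ T'}.ncard = 2 * (n - 1) := by
  exact flip_count n hn T hT

end Multitriangulation
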